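/- arXiv:1805.09118 — 7 statements merged into one kernel-verified Lean document; each statement's English description precedes it below -/
import Mathlib

section
/- Let m ≥ 2 and let a, b, c be divisors of m such that for every prime p, writing s, t, u for the p-adic valuations of a, b, c respectively: if s ≠ t then u = min(s,t), and if s = t then s ≤ u. Let e = (a*b*c/gcd(a,b)) * f, where f is a positive integer such that for every prime p, the p-adic valuation v of f satisfies v ≤ ν_p(m) − max(s,t,u), and moreover v = 0 whenever p = 2 and either a*b*c is odd or 2 divides gcd(a,b,c). Then there exists a subgroup G of Z with |G| = e, |A(G)| = a, |B(G)| = b and |C(G)| = c; in particular, G has exactly a+b+c−3 homologies. -/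
/-- `Z = ZMod m × ZMod m`. -/
abbrev Zgrp (m : ℕ) : Type := ZMod m × ZMod m

/-- `A(G) = {g ∈ G : g.2 = 0}`. -/
def Asub (m : ℕ) (G : AddSubgroup (Zgrp m)) : AddSubgroup (Zgrp m) :=
  G ⊓ (AddMonoidHom.snd (ZMod m) (ZMod m)).ker

/-- `B(G) = {g ∈ G : g.1 = 0}`. -/
def Bsub (m : ℕ) (G : AddSubgroup (Zgrp m)) : AddSubgroup (Zgrp m) :=
  G ⊓ (AddMonoidHom.fst (ZMod m) (ZMod m)).ker

/-- `C(G) = {g ∈ G : g.1 = g.2}`. -/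
def Csub (m : ℕ) (G : AddSubgroup (Zgrp m)) : AddSubgroup (Zgrp m) :=
  G ⊓ (AddMonoidHom.fst (ZMod m) (ZMod m) - AddMonoidHom.snd (ZMod m) (ZMod m)).ker

/-!
Let `d = gcd a b`. The condition on valuations says that `a`, `b`, `c` have pairwise gcd `d`, so
`a = d a'`, `b = d b'`, `c = d c'` with `a'`, `b'`, `c'` pairwise coprime, and the bound on `f` says
that `d n ∣ m` with `n = a' b' c' f`. Take for `G` the pairs of `d n`-torsion elements `(x, y)` with
`d (α x + β y) = 0`. If `α`, `β` are coprime, a unimodular change of coordinates identifies `G` with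
the product of the `d`-torsion and the `d n`-torsion, while `A(G)`, `B(G)`, `C(G)` are the torsion
subgroups of orders `d gcd(n, α)`, `d gcd(n, β)`, `d gcd(n, α + β)`.

It remains to solve `a' u + b' v = c'` with `u`, `v` prime to `n` and to put `α = a' u`, `β = b' v`.
By the Chinese remainder theorem this can be done one prime at a time, where it is an equation over
a field; it can fail only over `𝔽₂` when `a'`, `b'`, `c'` are all odd, which is the case the
condition on `f` at `2` excludes.
-/

open Polynomial
open scoped AddSubgroup

section Coprimality

variable {R : Type*} [CommRing R] [IsDedekindDomain R]

theorem finite_setOf_isMaximal_and_mem {n : R} (hn : n ≠ 0) :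
    {𝔭 : Ideal R | 𝔭.IsMaximal ∧ n ∈ 𝔭}.Finite := by
  have hspan : Ideal.span {n} ≠ ⊥ := mt Ideal.span_singleton_eq_bot.1 hn
  refine ((Ideal.finite_factors hspan).image (·.asIdeal)).subset fun 𝔭 ⟨hmax, hmem⟩ => ?_
  have hbot : 𝔭 ≠ ⊥ := by
    rintro rfl
    exact hn hmem
  exact ⟨⟨𝔭, hmax.isPrime, hbot⟩, Ideal.dvd_span_singleton.2 hmem, rfl⟩

theorem exists_isCoprime_eval {n : R} (hn : n ≠ 0) (P : R[X])
    (hP : ∀ 𝔭 : Ideal R, 𝔭.IsMaximal → n ∈ 𝔭 → ∃ x, P.eval x ∉ 𝔭) :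
    ∃ x, IsCoprime (P.eval x) n := by
  have := (finite_setOf_isMaximal_and_mem hn).to_subtype
  choose x hx using fun 𝔭 : {𝔭 : Ideal R | 𝔭.IsMaximal ∧ n ∈ 𝔭} => hP 𝔭 𝔭.2.1 𝔭.2.2
  have hcoprime : Pairwise (Function.onFun IsCoprime
      (Subtype.val : {𝔭 : Ideal R | 𝔭.IsMaximal ∧ n ∈ 𝔭} → Ideal R)) := fun 𝔭 𝔮 hne =>
    have := 𝔭.2.1
    have := 𝔮.2.1
    Ideal.isCoprime_of_isMaximal (Subtype.coe_ne_coe.2 hne)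
  obtain ⟨y, hy⟩ := Ideal.exists_forall_sub_mem_ideal hcoprime x
  refine ⟨y, ?_⟩
  by_contra hnot
  rw [← Ideal.isCoprime_span_singleton_iff, Ideal.isCoprime_iff_sup_eq] at hnot
  obtain ⟨𝔭, hmax, hle⟩ := Ideal.exists_le_maximal _ hnot
  rw [sup_le_iff, Ideal.span_singleton_le_iff_mem, Ideal.span_singleton_le_iff_mem] at hle
  have hsub : P.eval y - P.eval (x ⟨𝔭, hmax, hle.2⟩) ∈ 𝔭 :=
    𝔭.mem_of_dvd (sub_dvd_eval_sub _ _ P) (hy ⟨𝔭, hmax, hle.2⟩)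
  exact hx ⟨𝔭, hmax, hle.2⟩ ((Submodule.sub_mem_iff_right 𝔭 hle.1).1 hsub)

theorem exists_ne_zero_mul_add_mul_eq {K : Type*} [Field K] {a b c : K} (hab : IsCoprime a b)
    (hac : IsCoprime a c) (hbc : IsCoprime b c) (h2 : (2 : K) = 0 → a * b * c = 0) :
    ∃ u v, u ≠ 0 ∧ v ≠ 0 ∧ a * u + b * v = c := by
  by_cases ha : a = 0
  · have hb : b ≠ 0 := hab.ne_zero_or_ne_zero.resolve_left (not_not.2 ha)
    have hc : c ≠ 0 := hac.ne_zero_or_ne_zero.resolve_left (not_not.2 ha)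
    exact ⟨1, c / b, one_ne_zero, div_ne_zero hc hb, by rw [ha]; field_simp; ring⟩
  by_cases hb : b = 0
  · have hc : c ≠ 0 := hbc.ne_zero_or_ne_zero.resolve_left (not_not.2 hb)
    exact ⟨c / a, 1, div_ne_zero hc ha, one_ne_zero, by rw [hb]; field_simp; ring⟩
  by_cases hc : c = 0
  · exact ⟨b, -a, hb, neg_ne_zero.2 ha, by rw [hc]; ring⟩
  have h2' : (2 : K) ≠ 0 := fun h => mul_ne_zero (mul_ne_zero ha hb) hc (h2 h)
  exact ⟨2 * c / a, -c / b, div_ne_zero (mul_ne_zero h2' hc) ha,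
    div_ne_zero (neg_ne_zero.2 hc) hb, by field_simp; ring⟩

theorem exists_isCoprime_mul_add_mul_eq {a b c n : R} (hn : n ≠ 0) (hab : IsCoprime a b)
    (hac : IsCoprime a c) (hbc : IsCoprime b c)
    (h2 : ∀ 𝔭 : Ideal R, 𝔭.IsMaximal → n ∈ 𝔭 → 2 ∈ 𝔭 → a * b * c ∈ 𝔭) :
    ∃ u v, a * u + b * v = c ∧ IsCoprime u n ∧ IsCoprime v n := by
  have ⟨x, y, hxy⟩ := hab
  -- The solutions of `a * u + b * v = c` are `(c * x + b * k, c * y - a * k)`, and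
  -- a residual solution `(u, v)` has parameter `k = u * y - v * x`.
  obtain ⟨k, hk⟩ := exists_isCoprime_eval hn ((C (c * x) + C b * X) * (C (c * y) - C a * X))
    fun 𝔭 h𝔭 hn𝔭 => by
      let := Ideal.Quotient.field 𝔭
      let q := Ideal.Quotient.mk 𝔭
      have h2q : (2 : R ⧸ 𝔭) = 0 → q a * q b * q c = 0 := fun h => by
        rw [← map_mul, ← map_mul]
        exact Ideal.Quotient.eq_zero_iff_mem.2
          (h2 𝔭 h𝔭 hn𝔭 (Ideal.Quotient.eq_zero_iff_mem.1 (by rw [map_ofNat, h])))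
      obtain ⟨u, v, hu, hv, huv⟩ :=
        exists_ne_zero_mul_add_mul_eq (hab.map q) (hac.map q) (hbc.map q) h2q
      obtain ⟨u, rfl⟩ := Ideal.Quotient.mk_surjective u
      obtain ⟨v, rfl⟩ := Ideal.Quotient.mk_surjective v
      have hxyq : q x * q a + q y * q b = 1 := by rw [← map_mul, ← map_mul, ← map_add, hxy, map_one]
      refine ⟨u * y - v * x, fun hmem => mul_ne_zero hu hv ?_⟩
      rw [← Ideal.Quotient.eq_zero_iff_mem] at hmem
      simp only [eval_mul, eval_add, eval_sub, eval_C, eval_X, map_mul, map_add, map_sub] at hmem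
      have hfst : q c * q x + q b * (q u * q y - q v * q x) = q u := by
        linear_combination q u * hxyq - q x * huv
      have hsnd : q c * q y - q a * (q u * q y - q v * q x) = q v := by
        linear_combination q v * hxyq - q y * huv
      rwa [hfst, hsnd] at hmem
  simp only [eval_mul, eval_add, eval_sub, eval_C, eval_X] at hk
  exact ⟨_, _, by linear_combination c * hxy, hk.of_mul_left_left, hk.of_mul_left_right⟩

theorem exists_int_isCoprime_mul_add_mul_eq {a b c n : ℤ} (hn : n ≠ 0) (hab : IsCoprime a b)
    (hac : IsCoprime a c) (hbc : IsCoprime b c) (h2 : 2 ∣ n → 2 ∣ a * b * c) :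
    ∃ u v, a * u + b * v = c ∧ IsCoprime u n ∧ IsCoprime v n := by
  refine exists_isCoprime_mul_add_mul_eq hn hab hac hbc fun 𝔭 h𝔭 hn𝔭 h2𝔭 => ?_
  rcases n.even_or_odd with heven | ⟨k, hk⟩
  · exact 𝔭.mem_of_dvd (h2 heven.two_dvd) h2𝔭
  · have hone : (1 : ℤ) ∈ 𝔭 := by
      rw [← Submodule.add_mem_iff_right 𝔭 (𝔭.mul_mem_right k h2𝔭), ← hk]
      exact hn𝔭
    exact absurd hone ((Ideal.ne_top_iff_one 𝔭).1 h𝔭.ne_top)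

end Coprimality

section Arithmetic

theorem gcd_eq_gcd_of_factorization {a b c : ℕ} (ha : a ≠ 0) (hb : b ≠ 0) (hc : c ≠ 0)
    (h : ∀ p : ℕ, p.Prime →
      (a.factorization p ≠ b.factorization p →
        c.factorization p = min (a.factorization p) (b.factorization p)) ∧
      (a.factorization p = b.factorization p → a.factorization p ≤ c.factorization p)) :
    a.gcd c = a.gcd b ∧ b.gcd c = a.gcd b := by
  have hmin (p : ℕ) :
      min (a.factorization p) (c.factorization p) = min (a.factorization p) (b.factorization p) ∧
      min (b.factorization p) (c.factorization p) =
        min (a.factorization p) (b.factorization p) := by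
    by_cases hp : p.Prime
    · have := h p hp
      omega
    · simp only [Nat.factorization_eq_zero_of_not_prime _ hp, and_self]
  have hgcd := Nat.gcd_ne_zero_left (n := b) ha
  constructor
  · refine Nat.eq_of_factorization_eq (Nat.gcd_ne_zero_left ha) hgcd fun p => ?_
    rw [Nat.factorization_gcd ha hc, Nat.factorization_gcd ha hb]
    exact (hmin p).1
  · refine Nat.eq_of_factorization_eq (Nat.gcd_ne_zero_left hb) hgcd fun p => ?_
    rw [Nat.factorization_gcd hb hc, Nat.factorization_gcd ha hb]
    exact (hmin p).2

theorem exists_pairwise_coprime_of_gcd_eq {a b c : ℕ} (h0 : 0 < a.gcd b)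
    (hac : a.gcd c = a.gcd b) (hbc : b.gcd c = a.gcd b) :
    ∃ a' b' c', a = a.gcd b * a' ∧ b = a.gcd b * b' ∧ c = a.gcd b * c' ∧
      a'.Coprime b' ∧ a'.Coprime c' ∧ b'.Coprime c' :=
  ⟨a / a.gcd b, b / a.gcd b, c / a.gcd b,
    (Nat.mul_div_cancel' (Nat.gcd_dvd_left a b)).symm,
    (Nat.mul_div_cancel' (Nat.gcd_dvd_right a b)).symm,
    (Nat.mul_div_cancel' (hac ▸ Nat.gcd_dvd_right a c)).symm,
    Nat.coprime_div_gcd_div_gcd h0,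
    hac ▸ Nat.coprime_div_gcd_div_gcd (hac ▸ h0),
    hbc ▸ Nat.coprime_div_gcd_div_gcd (hbc ▸ h0)⟩

theorem two_dvd_mul_mul_of_not_odd {d a b c : ℕ} (hodd : ¬ Odd (d * a * (d * b) * (d * c)))
    (hgcd : ¬ 2 ∣ (d * a).gcd ((d * b).gcd (d * c))) : 2 ∣ a * b * c := by
  rw [Nat.gcd_mul_left, Nat.gcd_mul_left] at hgcd
  have hd : ¬ 2 ∣ d := fun h => hgcd (h.mul_right _)
  rw [Nat.not_odd_iff_even, even_iff_two_dvd] at hodd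
  simp only [Nat.prime_two.dvd_mul] at hodd ⊢
  tauto

theorem lcm_mul_left_of_pairwise_coprime (d : ℕ) {a b c : ℕ} (hab : a.Coprime b)
    (hac : a.Coprime c) (hbc : b.Coprime c) :
    (d * a).lcm ((d * b).lcm (d * c)) = d * (a * b * c) := by
  rw [Nat.lcm_mul_left, Nat.lcm_mul_left, hbc.lcm_eq_mul, (hab.mul_right hac).lcm_eq_mul, mul_assoc]

theorem lcm_mul_dvd_of_factorization_le {a b c f m : ℕ} (hm : m ≠ 0) (hf : f ≠ 0) (ha : a ∣ m)
    (hb : b ∣ m) (hc : c ∣ m)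
    (h : ∀ p : ℕ, p.Prime → f.factorization p ≤ m.factorization p -
      max (a.factorization p) (max (b.factorization p) (c.factorization p))) :
    a.lcm (b.lcm c) * f ∣ m := by
  have hbc : b.lcm c ∣ m := Nat.lcm_dvd hb hc
  have hlcm : a.lcm (b.lcm c) ∣ m := Nat.lcm_dvd ha hbc
  have hlcm0 := ne_zero_of_dvd_ne_zero hm hlcm
  rw [← Nat.factorization_prime_le_iff_dvd (mul_ne_zero hlcm0 hf) hm]
  intro p hp
  have hle : (a.lcm (b.lcm c)).factorization p ≤ m.factorization p :=
    (Nat.factorization_le_iff_dvd hlcm0 hm).2 hlcm p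
  rw [Nat.factorization_mul hlcm0 hf, Finsupp.add_apply]
  rw [Nat.factorization_lcm (ne_zero_of_dvd_ne_zero hm ha) (ne_zero_of_dvd_ne_zero hm hbc),
    Nat.factorization_lcm (ne_zero_of_dvd_ne_zero hm hb) (ne_zero_of_dvd_ne_zero hm hc)] at hle ⊢
  have := h p hp
  simp only [Finsupp.sup_apply] at hle ⊢
  omega

theorem int_gcd_mul_mul_of_isCoprime {n x : ℕ} {u : ℤ} (d : ℕ) (hx : x ∣ n)
    (hu : IsCoprime u n) : Int.gcd (d * n : ℤ) (d * (x * u)) = d * x := by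
  obtain ⟨k, rfl⟩ := hx
  have hk : Int.gcd k u = 1 := by
    rw [← Int.isCoprime_iff_gcd_eq_one]
    push_cast at hu
    exact hu.of_mul_right_right.symm
  rw [Nat.cast_mul, Int.gcd_mul_left, Int.gcd_mul_left, hk, Int.natAbs_natCast, Int.natAbs_natCast,
    mul_one]

end Arithmetic

section Torsion

variable {M : Type*} [AddCommGroup M]

theorem torsionBy_inf_torsionBy (k l : ℤ) : M[k] ⊓ M[l] = M[(k.gcd l : ℤ)] := by
  ext x
  simp only [AddSubgroup.mem_inf, Submodule.mem_toAddSubgroup, Submodule.mem_torsionBy_iff,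
    ← addOrderOf_dvd_iff_zsmul_eq_zero, Int.dvd_coe_gcd_iff]

theorem card_torsionBy_of_isAddCyclic [IsAddCyclic M] [Finite M] (k : ℕ) :
    Nat.card M[(k : ℤ)] = (Nat.card M).gcd k := by
  rw [← IsAddCyclic.card_nsmulAddMonoidHom_ker]
  congr! 2
  ext x
  simp [AddMonoidHom.mem_ker]

variable (M) in
theorem exists_addEquiv_prod_fst_eq {u v : ℤ} (huv : IsCoprime u v) :
    ∃ φ : M × M ≃+ M × M, ∀ g, (φ g).1 = u • g.1 + v • g.2 := by
  obtain ⟨r, s, hrs⟩ := huv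
  refine ⟨⟨⟨fun g => (u • g.1 + v • g.2, r • g.2 - s • g.1),
    fun g => (r • g.1 - v • g.2, s • g.1 + u • g.2), fun g => ?_, fun g => ?_⟩, fun g h => ?_⟩,
    fun g => rfl⟩
  · ext <;> dsimp only
    · linear_combination (norm := module) hrs • g.1
    · linear_combination (norm := module) hrs • g.2
  · ext <;> dsimp only
    · linear_combination (norm := module) hrs • g.1
    · linear_combination (norm := module) hrs • g.2
  · ext <;> simp only [Prod.fst_add, Prod.snd_add] <;> module

variable (M) in
/-- The subgroup of `M[N] × M[N]` on which the linear form `u • x + v • y` takes values in `M[d]`.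
For `M = ZMod m` it is the subgroup with prescribed homologies: it meets the axes and the diagonal
in the torsion subgroups cut out by `u`, `v` and `u + v`. -/
def torsionLine (N d u v : ℤ) : AddSubgroup (M × M) :=
  M[N].prod M[N] ⊓ M[d].comap (u • AddMonoidHom.fst M M + v • AddMonoidHom.snd M M)

variable {N d u v : ℤ}

theorem mem_torsionLine {g : M × M} :
    g ∈ torsionLine M N d u v ↔ N • g = 0 ∧ d • (u • g.1 + v • g.2) = 0 := by
  simp [torsionLine, AddSubgroup.mem_prod, Prod.ext_iff]

theorem comap_inl_torsionLine :
    (torsionLine M N d u v).comap (AddMonoidHom.inl M M) = M[(N.gcd (d * u) : ℤ)] := by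
  ext x
  simp [← torsionBy_inf_torsionBy, mem_torsionLine, mul_smul]

theorem comap_inr_torsionLine :
    (torsionLine M N d u v).comap (AddMonoidHom.inr M M) = M[(N.gcd (d * v) : ℤ)] := by
  ext x
  simp [← torsionBy_inf_torsionBy, mem_torsionLine, mul_smul]

theorem comap_diag_torsionLine :
    (torsionLine M N d u v).comap ((AddMonoidHom.id M).prod (AddMonoidHom.id M)) =
      M[(N.gcd (d * (u + v)) : ℤ)] := by
  ext x
  simp [← torsionBy_inf_torsionBy, mem_torsionLine, mul_smul, add_smul]

theorem card_torsionLine (hdN : d ∣ N) (huv : IsCoprime u v) :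
    Nat.card (torsionLine M N d u v) = Nat.card M[d] * Nat.card M[N] := by
  obtain ⟨φ, hφ⟩ := exists_addEquiv_prod_fst_eq M huv
  have hcomap : torsionLine M N d u v = (M[d].prod M[N]).comap φ.toAddMonoidHom := by
    ext g
    have hN : N • g = 0 ↔ N • φ g = 0 := by rw [← map_zsmul, φ.map_eq_zero_iff]
    have hd : d • (φ g).1 = 0 → N • (φ g).1 = 0 := by
      obtain ⟨k, rfl⟩ := hdN
      intro h
      rw [mul_comm, mul_smul, h, smul_zero]
    rw [mem_torsionLine, hN, ← hφ]
    simp only [Prod.ext_iff, Prod.smul_fst, Prod.smul_snd, Prod.fst_zero, Prod.snd_zero,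
      AddSubgroup.mem_comap, AddSubgroup.mem_prod, Submodule.mem_toAddSubgroup,
      Submodule.mem_torsionBy_iff, AddEquiv.toAddMonoidHom_eq_coe, AddMonoidHom.coe_coe]
    tauto
  rw [hcomap, AddSubgroup.comap_equiv_eq_map_symm',
    AddSubgroup.card_map_of_injective φ.symm.injective, ← Nat.card_prod]
  exact Nat.card_congr (AddSubgroup.prodEquiv _ _).toEquiv

end Torsion

section Homologies

theorem card_inf_range {M M' : Type*} [AddGroup M] [AddGroup M'] (H : AddSubgroup M')
    {φ : M →+ M'} (hφ : Function.Injective φ) :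
    Nat.card ↥(H ⊓ φ.range) = Nat.card (H.comap φ) := by
  rw [inf_comm, ← AddSubgroup.map_comap_eq, AddSubgroup.card_map_of_injective hφ]

variable {m : ℕ} {G : AddSubgroup (Zgrp m)}

theorem mem_Asub {g : Zgrp m} : g ∈ Asub m G ↔ g ∈ G ∧ g.2 = 0 := Iff.rfl

theorem mem_Bsub {g : Zgrp m} : g ∈ Bsub m G ↔ g ∈ G ∧ g.1 = 0 := Iff.rfl

theorem mem_Csub {g : Zgrp m} : g ∈ Csub m G ↔ g ∈ G ∧ g.1 = g.2 :=
  and_congr_right' sub_eq_zero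

variable (G)

theorem card_Asub : Nat.card (Asub m G) = Nat.card (G.comap (AddMonoidHom.inl _ _)) := by
  rw [← card_inf_range G (Prod.mk_left_injective 0)]
  congr! 2
  ext g
  simp [mem_Asub, Prod.ext_iff, eq_comm]

theorem card_Bsub : Nat.card (Bsub m G) = Nat.card (G.comap (AddMonoidHom.inr _ _)) := by
  rw [← card_inf_range G (Prod.mk_right_injective 0)]
  congr! 2
  ext g
  simp [mem_Bsub, Prod.ext_iff, eq_comm]

theorem card_Csub :
    Nat.card (Csub m G) = Nat.card (G.comap ((AddMonoidHom.id _).prod (AddMonoidHom.id _))) := by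
  rw [← card_inf_range G fun x y h => congrArg Prod.fst h]
  congr! 2
  ext g
  simp [mem_Csub, Prod.ext_iff]

theorem ncard_union_union_sdiff_zero {M : Type*} [AddGroup M] {A B C : AddSubgroup M} [Finite A]
    [Finite B] [Finite C] (hAB : Disjoint A B) (hAC : Disjoint A C) (hBC : Disjoint B C) :
    (((A : Set M) ∪ B ∪ C) \ {0}).ncard = Nat.card A + Nat.card B + Nat.card C - 3 := by
  have hncard (H : AddSubgroup M) [Finite H] : ((H : Set M) \ {0}).ncard + 1 = Nat.card H :=
    Set.ncard_sdiff_singleton_add_one H.zero_mem (Set.toFinite (H : Set M))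
  have hdisj {H K : AddSubgroup M} (h : Disjoint H K) :
      Disjoint ((H : Set M) \ {0}) ((K : Set M) \ {0}) :=
    Set.disjoint_left.2 fun x hH hK => hH.2 (AddSubgroup.disjoint_def.1 h hH.1 hK.1)
  rw [Set.union_sdiff_distrib, Set.union_sdiff_distrib,
    Set.ncard_union_eq ((hdisj hAC).union_left (hdisj hBC)), Set.ncard_union_eq (hdisj hAB)]
  have := hncard A
  have := hncard B
  have := hncard C
  omega

theorem ncard_homologies [NeZero m] :
    (((Asub m G : Set (Zgrp m)) ∪ Bsub m G ∪ Csub m G) \ {0}).ncard =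
      Nat.card (Asub m G) + Nat.card (Bsub m G) + Nat.card (Csub m G) - 3 := by
  refine ncard_union_union_sdiff_zero ?_ ?_ ?_ <;> rw [AddSubgroup.disjoint_def] <;> intro g h h'
  · rw [mem_Asub] at h
    rw [mem_Bsub] at h'
    exact Prod.ext h'.2 h.2
  · rw [mem_Asub] at h
    rw [mem_Csub] at h'
    exact Prod.ext (h'.2.trans h.2) h.2
  · rw [mem_Bsub] at h
    rw [mem_Csub] at h'
    exact Prod.ext h.2 (h'.2.symm.trans h.2)

theorem exists_addSubgroup_of_pairwise_coprime [NeZero m] {d a b c f : ℕ} (hab : a.Coprime b)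
    (hac : a.Coprime c) (hbc : b.Coprime c) (h2 : 2 ∣ f → 2 ∣ a * b * c)
    (hm : d * (a * b * c * f) ∣ m) :
    ∃ G : AddSubgroup (Zgrp m), Nat.card G = d * (d * (a * b * c * f)) ∧
      Nat.card (Asub m G) = d * a ∧ Nat.card (Bsub m G) = d * b ∧ Nat.card (Csub m G) = d * c := by
  set n := a * b * c * f with hn
  have hn0 : (n : ℤ) ≠ 0 :=
    Nat.cast_ne_zero.2 (ne_zero_of_dvd_ne_zero (NeZero.ne m) (dvd_of_mul_left_dvd hm))
  have hac' : IsCoprime (a : ℤ) c := Nat.isCoprime_iff_coprime.2 hac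
  have h2' : (2 : ℤ) ∣ n → (2 : ℤ) ∣ a * b * c := fun h => by
    have h2n : 2 ∣ a * b * c * f := by exact_mod_cast h
    exact_mod_cast (Nat.prime_two.dvd_mul.1 h2n).elim id h2
  obtain ⟨u, v, huv, hu, hv⟩ := exists_int_isCoprime_mul_add_mul_eq hn0
    (Nat.isCoprime_iff_coprime.2 hab) hac' (Nat.isCoprime_iff_coprime.2 hbc) h2'
  have hcn : c ∣ n := ⟨a * b * f, by rw [hn]; ring⟩
  have huc : IsCoprime u c := hu.of_isCoprime_of_dvd_right (Int.natCast_dvd_natCast.2 hcn)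
  have hcop : IsCoprime (a * u) (b * v) := by
    rw [← IsCoprime.mul_add_left_right_iff (z := 1), mul_one, huv]
    exact hac'.mul_left huc
  have hcard (k : ℕ) (hk : k ∣ m) : Nat.card (ZMod m)[(k : ℤ)] = k := by
    rw [card_torsionBy_of_isAddCyclic, Nat.card_zmod, Nat.gcd_eq_right hk]
  have hdvd {x : ℕ} (hx : x ∣ n) : d * x ∣ m := (mul_dvd_mul_left d hx).trans hm
  have han : a ∣ n := ⟨b * c * f, by rw [hn]; ring⟩
  have hbn : b ∣ n := ⟨a * c * f, by rw [hn]; ring⟩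
  refine ⟨torsionLine (ZMod m) (d * n) d (a * u) (b * v), ?_, ?_, ?_, ?_⟩
  · rw [card_torsionLine (dvd_mul_right _ _) hcop, hcard d (dvd_of_mul_right_dvd hm)]
    exact_mod_cast congrArg _ (hcard _ hm)
  · rw [card_Asub, comap_inl_torsionLine, int_gcd_mul_mul_of_isCoprime d han hu, hcard _ (hdvd han)]
  · rw [card_Bsub, comap_inr_torsionLine, int_gcd_mul_mul_of_isCoprime d hbn hv, hcard _ (hdvd hbn)]
  · have hgcd := int_gcd_mul_mul_of_isCoprime d hcn isCoprime_one_left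
    rw [mul_one] at hgcd
    rw [card_Csub, comap_diag_torsionLine, huv, hgcd, hcard _ (hdvd hcn)]

end Homologies

/-- Theorem 3.1(i) of Dalla Volta–Montanucci–Zini: existence of a subgroup
`G ≤ ZMod m × ZMod m` with prescribed order `e` and prescribed orders `a`, `b`, `c`
of the subgroups `A(G)`, `B(G)`, `C(G)`; in particular `G` has exactly
`a + b + c - 3` homologies. -/
theorem stmt0 (m : ℕ) (hm : 2 ≤ m) (a b c : ℕ)
    (ha0 : 0 < a) (hb0 : 0 < b) (hc0 : 0 < c)
    (ha : a ∣ m) (hb : b ∣ m) (hc : c ∣ m)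
    (habc : ∀ p : ℕ, p.Prime →
      (a.factorization p ≠ b.factorization p →
        c.factorization p = min (a.factorization p) (b.factorization p)) ∧
      (a.factorization p = b.factorization p →
        a.factorization p ≤ c.factorization p))
    (f : ℕ) (hf0 : 0 < f)
    (hfval : ∀ p : ℕ, p.Prime →
      f.factorization p ≤ m.factorization p -
        max (a.factorization p) (max (b.factorization p) (c.factorization p)))
    (hf2 : (Odd (a * b * c) ∨ 2 ∣ Nat.gcd a (Nat.gcd b c)) → f.factorization 2 = 0)
    (e : ℕ) (he : e = a * b * c / Nat.gcd a b * f) :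
    ∃ G : AddSubgroup (Zgrp m),
      Nat.card ↥G = e ∧
      Nat.card ↥(Asub m G) = a ∧
      Nat.card ↥(Bsub m G) = b ∧
      Nat.card ↥(Csub m G) = c ∧
      (((Asub m G : Set (Zgrp m)) ∪ (Bsub m G : Set (Zgrp m)) ∪ (Csub m G : Set (Zgrp m)))
        \ {0}).ncard = a + b + c - 3 := by
  have : NeZero m := ⟨by omega⟩
  obtain ⟨hac, hbc⟩ := gcd_eq_gcd_of_factorization ha0.ne' hb0.ne' hc0.ne' habc
  have hlcm : a.lcm (b.lcm c) * f ∣ m :=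
    lcm_mul_dvd_of_factorization_le (NeZero.ne m) hf0.ne' ha hb hc hfval
  have hd0 : 0 < a.gcd b := Nat.gcd_pos_of_pos_left b ha0
  obtain ⟨a', b', c', haa', hbb', hcc', hab', hac', hbc'⟩ :=
    exists_pairwise_coprime_of_gcd_eq hd0 hac hbc
  generalize a.gcd b = d at *
  subst haa' hbb' hcc'
  rw [lcm_mul_left_of_pairwise_coprime d hab' hac' hbc', mul_assoc] at hlcm
  have h2 (hf : 2 ∣ f) : 2 ∣ a' * b' * c' :=
    have hnot := mt hf2 (Nat.prime_two.factorization_pos_of_dvd hf0.ne' hf).ne'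
    two_dvd_mul_mul_of_not_odd (fun h => hnot (.inl h)) fun h => hnot (.inr h)
  obtain ⟨G, hG, hA, hB, hC⟩ := exists_addSubgroup_of_pairwise_coprime hab' hac' hbc' h2 hlcm
  refine ⟨G, ?_, hA, hB, hC, by rw [ncard_homologies, hA, hB, hC]⟩
  have he' : d * a' * (d * b') * (d * c') = d * (d * d * (a' * b' * c')) := by ring
  rw [hG, he, he', Nat.mul_div_cancel_left _ hd0]
  ring
end

section
/- For every subgroup G of Z, the quotient of G by the subgroup A(G) + B(G) + C(G) generated by the homologies of G is a cyclic group. -/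
section

variable {M N : Type*} [AddGroup M] [AddGroup N]

theorem isAddCyclic_quotient_of_ker_le (f : M →+ N) [IsAddCyclic f.range]
    (H : AddSubgroup M) [H.Normal] (hH : f.ker ≤ H) : IsAddCyclic (M ⧸ H) := by
  have : IsAddCyclic (M ⧸ f.ker) :=
    isAddCyclic_of_injective (QuotientAddGroup.rangeKerLift f)
      (QuotientAddGroup.rangeKerLift_injective f)
  exact isAddCyclic_of_surjective (QuotientAddGroup.map f.ker H (AddMonoidHom.id M) hH)
    (QuotientAddGroup.map_surjective_of_surjective f.ker H (AddMonoidHom.id M)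
      QuotientAddGroup.mk_surjective hH)

theorem stmt2_general [IsAddCyclic N] (f : M →+ N) (G H : AddSubgroup M)
    [(H.addSubgroupOf G).Normal] (hH : G ⊓ f.ker ≤ H) :
    IsAddCyclic (G ⧸ H.addSubgroupOf G) := by
  refine isAddCyclic_quotient_of_ker_le (f.domRestrict G) (H.addSubgroupOf G) ?_
  rw [AddMonoidHom.ker_domRestrict, ← AddSubgroup.inf_addSubgroupOf_left]
  exact AddSubgroup.addSubgroupOf_mono G hH

end

/-- From the proof of Theorem 3.1: the quotient of `G` by the subgroup
`A(G) + B(G) + C(G)` generated by the homologies of `G` is cyclic. -/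
theorem stmt2 (m : ℕ) (hm : 2 ≤ m) (G : AddSubgroup (Zgrp m)) :
    IsAddCyclic (↥G ⧸ ((Asub m G ⊔ Bsub m G ⊔ Csub m G).addSubgroupOf G)) := by
  have Asub_le : Asub m G ≤ Asub m G ⊔ Bsub m G ⊔ Csub m G :=
    le_sup_left.trans le_sup_left
  exact stmt2_general (AddMonoidHom.snd (ZMod m) (ZMod m)) G _ Asub_le
end

section
/- For every subgroup G of Z, with a = |A(G)|, b = |B(G)| and c = |C(G)|: gcd(a,b) divides c, and the subgroup A(G) + B(G) + C(G) of Z has order a*b*c/gcd(a,b). -/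
/-!
Let `P` and `Q` be the subgroups of the coordinate group formed by the `x` with `(x, 0) ∈ G`,
respectively `(0, x) ∈ G`. Then `A(G) + B(G) = P × Q`, and as `P × Q ⊆ G`, the subgroup
`C(G)` meets it in the diagonal copy of `P ∩ Q`. Hence `|A + B + C| * |P ∩ Q| = a * b * c`, and
`|P ∩ Q| = gcd(a, b)`: in a cyclic group the order equals the exponent, so
`|P + Q| = lcm(|P|, |Q|)`.
-/

section CardSup

theorem card_sup_mul_card_inf {M : Type*} [AddGroup M] (H K : AddSubgroup M) [K.Normal] :
    Nat.card ↥(H ⊔ K) * Nat.card ↥(H ⊓ K) = Nat.card H * Nat.card K := by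
  have card_sup : Nat.card K * K.relIndex H = Nat.card ↥(H ⊔ K) := by
    simpa only [AddSubgroup.relIndex_sup_right, AddSubgroup.relIndex_bot_left] using
      AddSubgroup.relIndex_mul_relIndex ⊥ K (H ⊔ K) bot_le le_sup_right
  have card_left : Nat.card ↥(H ⊓ K) * K.relIndex H = Nat.card H := by
    simpa only [AddSubgroup.inf_relIndex_left, AddSubgroup.relIndex_bot_left] using
      AddSubgroup.relIndex_mul_relIndex ⊥ (H ⊓ K) H bot_le inf_le_left
  rw [← card_sup, ← card_left]
  ring

variable {M : Type*} [AddCommGroup M] (H K : AddSubgroup M)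

theorem card_sup_eq_lcm_of_isAddCyclic_sup [IsAddCyclic ↥(H ⊔ K)] :
    Nat.card ↥(H ⊔ K) = Nat.lcm (Nat.card H) (Nat.card K) := by
  apply Nat.dvd_antisymm
  · rw [← IsAddCyclic.exponent_eq_card]
    refine AddMonoid.exponent_dvd_of_forall_nsmul_eq_zero fun ⟨x, hx⟩ => Subtype.ext ?_
    obtain ⟨h, hh, k, hk, rfl⟩ := AddSubgroup.mem_sup.mp hx
    have lcm_nsmul_h : Nat.lcm (Nat.card H) (Nat.card K) • h = 0 :=
      addOrderOf_dvd_iff_nsmul_eq_zero.mp <|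
        (H.addOrderOf_dvd_natCard hh).trans (Nat.dvd_lcm_left _ _)
    have lcm_nsmul_k : Nat.lcm (Nat.card H) (Nat.card K) • k = 0 :=
      addOrderOf_dvd_iff_nsmul_eq_zero.mp <|
        (K.addOrderOf_dvd_natCard hk).trans (Nat.dvd_lcm_right _ _)
    simp [lcm_nsmul_h, lcm_nsmul_k]
  · exact Nat.lcm_dvd (AddSubgroup.card_dvd_of_le le_sup_left)
      (AddSubgroup.card_dvd_of_le le_sup_right)

theorem card_inf_eq_gcd_of_isAddCyclic_sup [Finite H] [Finite K] [IsAddCyclic ↥(H ⊔ K)] :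
    Nat.card ↥(H ⊓ K) = Nat.gcd (Nat.card H) (Nat.card K) := by
  have lcm_pos : 0 < Nat.lcm (Nat.card H) (Nat.card K) := Nat.lcm_pos Nat.card_pos Nat.card_pos
  apply Nat.eq_of_mul_eq_mul_left lcm_pos
  rw [← card_sup_eq_lcm_of_isAddCyclic_sup, card_sup_mul_card_inf,
    card_sup_eq_lcm_of_isAddCyclic_sup, ← Nat.gcd_mul_lcm, mul_comm]

end CardSup

section Sections

variable {M N : Type*} [AddGroup M] [AddGroup N]

/-- The section of `G` by the first axis, `{x | (x, 0) ∈ G}`. It is a copy of `A(G)` inside the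
first factor, so that it can be compared with the copy of `B(G)` inside the second. -/
def fstSection (G : AddSubgroup (M × N)) : AddSubgroup M :=
  G.comap (AddMonoidHom.inl M N)

/-- The section of `G` by the second axis, `{y | (0, y) ∈ G}`: a copy of `B(G)` inside the second
factor. -/
def sndSection (G : AddSubgroup (M × N)) : AddSubgroup N :=
  G.comap (AddMonoidHom.inr M N)

variable (G : AddSubgroup (M × N))

theorem map_inl_fstSection :
    (fstSection G).map (AddMonoidHom.inl M N) = G ⊓ (AddMonoidHom.snd M N).ker := by
  have range_inl : (AddMonoidHom.inl M N).range = (AddMonoidHom.snd M N).ker := by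
    ext ⟨x, y⟩
    simp [AddSubgroup.mem_prod, eq_comm]
  rw [fstSection, AddSubgroup.map_comap_eq, range_inl, inf_comm]

theorem map_inr_sndSection :
    (sndSection G).map (AddMonoidHom.inr M N) = G ⊓ (AddMonoidHom.fst M N).ker := by
  have range_inr : (AddMonoidHom.inr M N).range = (AddMonoidHom.fst M N).ker := by
    ext ⟨x, y⟩
    simp [AddSubgroup.mem_prod, eq_comm]
  rw [sndSection, AddSubgroup.map_comap_eq, range_inr, inf_comm]

theorem card_fstSection :
    Nat.card (fstSection G) = Nat.card ↥(G ⊓ (AddMonoidHom.snd M N).ker) := by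
  rw [← map_inl_fstSection,
    AddSubgroup.card_map_of_injective (Prod.mk_left_injective 0)]

theorem card_sndSection :
    Nat.card (sndSection G) = Nat.card ↥(G ⊓ (AddMonoidHom.fst M N).ker) := by
  rw [← map_inr_sndSection,
    AddSubgroup.card_map_of_injective (Prod.mk_right_injective 0)]

instance finite_fstSection [Finite G] : Finite (fstSection G) :=
  Finite.of_injective (fun x : fstSection G => (⟨(x, 0), x.2⟩ : G)) fun _ _ h =>
    Subtype.ext (congrArg (fun g : G => g.1.1) h)

instance finite_sndSection [Finite G] : Finite (sndSection G) :=
  Finite.of_injective (fun y : sndSection G => (⟨(0, y), y.2⟩ : G)) fun _ _ h =>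
    Subtype.ext (congrArg (fun g : G => g.1.2) h)

theorem map_inl_sup_map_inr (H : AddSubgroup M) (K : AddSubgroup N) :
    H.map (AddMonoidHom.inl M N) ⊔ K.map (AddMonoidHom.inr M N) = H.prod K := by
  obtain ⟨inl_le, inr_le⟩ := AddSubgroup.prod_le_iff.mp (le_refl (H.prod K))
  exact le_antisymm (sup_le inl_le inr_le)
    (AddSubgroup.prod_le_iff.mpr ⟨le_sup_left, le_sup_right⟩)

theorem inf_ker_snd_sup_inf_ker_fst :
    G ⊓ (AddMonoidHom.snd M N).ker ⊔ G ⊓ (AddMonoidHom.fst M N).ker =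
      (fstSection G).prod (sndSection G) := by
  rw [← map_inl_fstSection, ← map_inr_sndSection, map_inl_sup_map_inr]

end Sections

section Diagonal

variable {M : Type*} [AddCommGroup M]

theorem card_prod_inf_ker_fst_sub_snd (H K : AddSubgroup M) :
    Nat.card ↥(H.prod K ⊓ (AddMonoidHom.fst M M - AddMonoidHom.snd M M).ker) =
      Nat.card ↥(H ⊓ K) := by
  let diag : M →+ M × M := (AddMonoidHom.id M).prod (AddMonoidHom.id M)
  have diag_injective : Function.Injective diag := fun _ _ h => congrArg Prod.fst h
  have map_diag : (H ⊓ K).map diag =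
      H.prod K ⊓ (AddMonoidHom.fst M M - AddMonoidHom.snd M M).ker := by
    ext ⟨x, y⟩
    simp only [AddSubgroup.mem_map, AddSubgroup.mem_inf, AddSubgroup.mem_prod,
      AddMonoidHom.mem_ker, AddMonoidHom.sub_apply, AddMonoidHom.coe_fst, AddMonoidHom.coe_snd,
      sub_eq_zero]
    constructor
    · rintro ⟨z, hz, hzxy⟩
      obtain ⟨rfl, rfl⟩ := Prod.mk.inj hzxy
      exact ⟨hz, rfl⟩
    · rintro ⟨hx, rfl⟩
      exact ⟨x, hx, rfl⟩
  rw [← map_diag, AddSubgroup.card_map_of_injective diag_injective]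

variable (G : AddSubgroup (M × M))

theorem card_prod_sections_inf_inf_ker_fst_sub_snd :
    Nat.card ↥((fstSection G).prod (sndSection G) ⊓
        (G ⊓ (AddMonoidHom.fst M M - AddMonoidHom.snd M M).ker)) =
      Nat.card ↥(fstSection G ⊓ sndSection G) := by
  have prod_le : (fstSection G).prod (sndSection G) ≤ G := by
    rw [← inf_ker_snd_sup_inf_ker_fst]
    exact sup_le inf_le_left inf_le_left
  rw [← inf_assoc, inf_eq_left.mpr prod_le, card_prod_inf_ker_fst_sub_snd]

theorem card_inf_sections_dvd :
    Nat.card ↥(fstSection G ⊓ sndSection G) ∣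
      Nat.card ↥(G ⊓ (AddMonoidHom.fst M M - AddMonoidHom.snd M M).ker) := by
  rw [← card_prod_sections_inf_inf_ker_fst_sub_snd]
  exact AddSubgroup.card_dvd_of_le inf_le_right

theorem card_sup_mul_card_inf_sections :
    Nat.card ↥(G ⊓ (AddMonoidHom.snd M M).ker ⊔ G ⊓ (AddMonoidHom.fst M M).ker ⊔
          G ⊓ (AddMonoidHom.fst M M - AddMonoidHom.snd M M).ker) *
        Nat.card ↥(fstSection G ⊓ sndSection G) =
      Nat.card (fstSection G) * Nat.card (sndSection G) *
        Nat.card ↥(G ⊓ (AddMonoidHom.fst M M - AddMonoidHom.snd M M).ker) := by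
  rw [inf_ker_snd_sup_inf_ker_fst, ← card_prod_sections_inf_inf_ker_fst_sub_snd,
    card_sup_mul_card_inf, Nat.card_congr (AddSubgroup.prodEquiv _ _).toEquiv, Nat.card_prod]

theorem stmt3_general [Finite G] [IsAddCyclic ↥(fstSection G ⊔ sndSection G)] (a b c : ℕ)
    (hA : a = Nat.card ↥(G ⊓ (AddMonoidHom.snd M M).ker))
    (hB : b = Nat.card ↥(G ⊓ (AddMonoidHom.fst M M).ker))
    (hC : c = Nat.card ↥(G ⊓ (AddMonoidHom.fst M M - AddMonoidHom.snd M M).ker)) :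
    Nat.gcd a b ∣ c ∧
    Nat.card ↥(G ⊓ (AddMonoidHom.snd M M).ker ⊔ G ⊓ (AddMonoidHom.fst M M).ker ⊔
      G ⊓ (AddMonoidHom.fst M M - AddMonoidHom.snd M M).ker) = a * b * c / Nat.gcd a b := by
  rw [← card_fstSection] at hA
  rw [← card_sndSection] at hB
  have card_inf : Nat.card ↥(fstSection G ⊓ sndSection G) = Nat.gcd a b := by
    rw [card_inf_eq_gcd_of_isAddCyclic_sup, hA, hB]
  have gcd_pos : 0 < Nat.gcd a b := Nat.gcd_pos_of_pos_left b (hA ▸ Nat.card_pos)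
  constructor
  · rw [← card_inf, hC]
    exact card_inf_sections_dvd G
  · apply Nat.eq_div_of_mul_eq_left gcd_pos.ne'
    rw [← card_inf, card_sup_mul_card_inf_sections, hA, hB, hC]

end Diagonal

/-- From the proof of Theorem 3.1: `gcd(a,b) ∣ c` and the subgroup
`A(G) + B(G) + C(G)` generated by the homologies has order `a*b*c/gcd(a,b)`. -/
theorem stmt3 (m : ℕ) (hm : 2 ≤ m) (G : AddSubgroup (Zgrp m)) (a b c : ℕ)
    (hA : a = Nat.card ↥(Asub m G)) (hB : b = Nat.card ↥(Bsub m G))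
    (hC : c = Nat.card ↥(Csub m G)) :
    Nat.gcd a b ∣ c ∧
    Nat.card ↥(Asub m G ⊔ Bsub m G ⊔ Csub m G) = a * b * c / Nat.gcd a b := by
  have : NeZero m := ⟨by lia⟩
  exact stmt3_general G a b c hA hB hC
end

section
/- If G and G' are subgroups of Z with |G| = |G'|, |A(G)| = |A(G')|, |B(G)| = |B(G')| and |C(G)| = |C(G')|, then G and G' are isomorphic as groups. -/
/-!
A finite abelian group `G` of exponent `e` splits off a cyclic subgroup of order `e`, by extending
a faithful character of that subgroup to `G`. When `G` embeds in a product of two finite cyclic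
groups, the complement `K` is again cyclic: with `k` the exponent of `K`, the `k`-torsion of `G` has
at most `k ^ 2` elements, while the two factors contribute `k` and `|K|` to its order. Hence
`G ≃ ℤ/e × ℤ/(|G|/e)`. Finally `e` is the least common multiple of the orders of the two
projections of `G`, which are `|G| / |B(G)|` and `|G| / |A(G)|`.
-/

theorem exists_isCompl_zpowers_of_orderOf_eq_exponent {G : Type*} [CommGroup G] [Finite G]
    {g : G} (hg : orderOf g = Monoid.exponent G) :
    ∃ K : Subgroup G, IsCompl (Subgroup.zpowers g) K := by
  have : NeZero (Monoid.exponent G) := ⟨Monoid.exponent_ne_zero_of_finite⟩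
  let μ := rootsOfUnity (Monoid.exponent G) ℂ
  have card_eq : Nat.card (Subgroup.zpowers g) = Nat.card μ := by
    rw [HasEnoughRootsOfUnity.natCard_rootsOfUnity, Nat.card_zpowers, hg]
  let ψ : Subgroup.zpowers g ≃* μ := mulEquivOfCyclicCardEq card_eq
  obtain ⟨χ, hχ⟩ := MonoidHom.domRestrict_surjective ℂ (Subgroup.zpowers g)
    (μ.subtype.comp ψ.toMonoidHom)
  have χ_eq_ψ (z : Subgroup.zpowers g) : χ z = ψ z := DFunLike.congr_fun hχ z
  have χ_mem (x : G) : χ x ∈ μ := by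
    rw [mem_rootsOfUnity, ← map_pow, Monoid.pow_exponent_eq_one, map_one]
  refine ⟨χ.ker, Subgroup.disjoint_def.2 fun {x} hx hχx => ?_, codisjoint_iff.2 ?_⟩
  · have : ψ ⟨x, hx⟩ = 1 := Subtype.ext ((χ_eq_ψ ⟨x, hx⟩).symm.trans hχx)
    exact congrArg Subtype.val ((map_eq_one_iff ψ ψ.injective).1 this)
  · refine (Subgroup.eq_top_iff' _).2 fun x => ?_
    obtain ⟨z, hz⟩ := ψ.surjective ⟨χ x, χ_mem x⟩
    have hχz : χ z = χ x := by rw [χ_eq_ψ, hz]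
    refine Subgroup.mem_sup.2 ⟨z, z.2, (z : G)⁻¹ * x, ?_, mul_inv_cancel_left _ _⟩
    rw [MonoidHom.mem_ker, map_mul, map_inv, hχz, inv_mul_cancel]

theorem exists_isCompl_zmultiples_of_addOrderOf_eq_exponent {G : Type*} [AddCommGroup G]
    [Finite G] {g : G} (hg : addOrderOf g = AddMonoid.exponent G) :
    ∃ K : AddSubgroup G, IsCompl (AddSubgroup.zmultiples g) K := by
  obtain ⟨K, hK⟩ := exists_isCompl_zpowers_of_orderOf_eq_exponent (g := Multiplicative.ofAdd g)
    (by rw [orderOf_ofAdd_eq_addOrderOf, Monoid.exponent_multiplicative, hg])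
  exact ⟨AddSubgroup.toSubgroup.symm K, AddSubgroup.toSubgroup.isCompl_iff.2 <| by
    rwa [OrderIso.apply_symm_apply]⟩

theorem nonempty_prod_addEquiv_of_isCompl {G : Type*} [AddCommGroup G] {H K : AddSubgroup G}
    (h : IsCompl H K) : Nonempty (H × K ≃+ G) :=
  ⟨(Submodule.prodEquivOfIsCompl _ _ (AddSubgroup.toIntSubmodule.isCompl_iff.1 h)).toAddEquiv⟩

theorem natCard_ker_nsmul_prod (A B : Type*) [AddCommGroup A] [AddCommGroup B] (n : ℕ) :
    Nat.card (nsmulAddMonoidHom n : A × B →+ A × B).ker =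
      Nat.card (nsmulAddMonoidHom n : A →+ A).ker *
        Nat.card (nsmulAddMonoidHom n : B →+ B).ker := by
  have : (nsmulAddMonoidHom n : A × B →+ A × B) =
    (nsmulAddMonoidHom n).prodMap (nsmulAddMonoidHom n) := rfl
  rw [this, AddMonoidHom.ker_prodMap, Nat.card_congr (AddSubgroup.prodEquiv _ _).toEquiv,
    Nat.card_prod]

theorem natCard_ker_nsmul_le_of_injective {A B : Type*} [AddCommGroup A] [AddCommGroup B]
    [Finite B] {φ : A →+ B} (hφ : Function.Injective φ) (n : ℕ) :
    Nat.card (nsmulAddMonoidHom n : A →+ A).ker ≤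
      Nat.card (nsmulAddMonoidHom n : B →+ B).ker := by
  have map_mem (a : (nsmulAddMonoidHom n : A →+ A).ker) :
      φ a ∈ (nsmulAddMonoidHom n : B →+ B).ker := by
    have ha : n • (a : A) = 0 := a.2
    rw [AddMonoidHom.mem_ker, nsmulAddMonoidHom_apply, ← map_nsmul, ha, map_zero]
  exact Nat.card_le_card_of_injective (fun a => ⟨φ a, map_mem a⟩)
    fun _ _ h => Subtype.ext (hφ (congrArg Subtype.val h))

section CyclicProduct

variable {X Y : Type*} [AddCommGroup X] [IsAddCyclic X] [Finite X]
  [AddCommGroup Y] [IsAddCyclic Y] [Finite Y]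

theorem isAddCyclic_right_of_injective_prod {A K : Type*} [AddCommGroup A] [IsAddCyclic A]
    [AddCommGroup K] {φ : A × K →+ X × Y} (hφ : Function.Injective φ)
    (hdvd : AddMonoid.exponent K ∣ Nat.card A) : IsAddCyclic K := by
  have : Finite (A × K) := Finite.of_injective φ hφ
  have : Finite A := Finite.prod_left K
  have : Finite K := Finite.prod_right A
  set k := AddMonoid.exponent K
  have k_pos : 0 < k := Nat.pos_of_ne_zero AddMonoid.exponent_ne_zero_of_finite
  have ker_nsmul_eq_top : (nsmulAddMonoidHom k : K →+ K).ker = ⊤ :=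
    (AddSubgroup.eq_top_iff' _).2 AddMonoid.exponent_nsmul_eq_zero
  have mul_card_le : k * Nat.card K ≤ k * k := calc
    k * Nat.card K = Nat.card (nsmulAddMonoidHom k : A × K →+ A × K).ker := by
      rw [natCard_ker_nsmul_prod, IsAddCyclic.card_nsmulAddMonoidHom_ker,
        Nat.gcd_eq_right hdvd, ker_nsmul_eq_top, AddSubgroup.card_top]
    _ ≤ Nat.card (nsmulAddMonoidHom k : X × Y →+ X × Y).ker :=
      natCard_ker_nsmul_le_of_injective hφ k
    _ = (Nat.card X).gcd k * (Nat.card Y).gcd k := by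
      rw [natCard_ker_nsmul_prod, IsAddCyclic.card_nsmulAddMonoidHom_ker,
        IsAddCyclic.card_nsmulAddMonoidHom_ker]
    _ ≤ k * k := Nat.mul_le_mul (Nat.gcd_le_right _ k_pos) (Nat.gcd_le_right _ k_pos)
  have k_dvd_card : k ∣ Nat.card K := AddGroup.exponent_dvd_nat_card
  exact IsAddCyclic.of_exponent_eq_card <| (Nat.le_of_dvd Nat.card_pos k_dvd_card).antisymm
    (Nat.le_of_mul_le_mul_left mul_card_le k_pos)

theorem nonempty_addEquiv_zmod_prod_zmod {G : Type*} [AddCommGroup G] {φ : G →+ X × Y}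
    (hφ : Function.Injective φ) :
    Nonempty (G ≃+
      ZMod (AddMonoid.exponent G) × ZMod (Nat.card G / AddMonoid.exponent G)) := by
  have : Finite G := Finite.of_injective φ hφ
  obtain ⟨g, hg⟩ := AddMonoid.exists_addOrderOf_eq_exponent (G := G) .of_finite
  obtain ⟨K, hK⟩ := exists_isCompl_zmultiples_of_addOrderOf_eq_exponent hg
  obtain ⟨e⟩ := nonempty_prod_addEquiv_of_isCompl hK
  have card_zmultiples : Nat.card (AddSubgroup.zmultiples g) = AddMonoid.exponent G := by
    rw [Nat.card_zmultiples, hg]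
  have card_K : Nat.card K = Nat.card G / AddMonoid.exponent G := by
    rw [← Nat.card_congr e.toEquiv, Nat.card_prod, card_zmultiples,
      Nat.mul_div_cancel_left _ (Nat.pos_of_ne_zero AddMonoid.exponent_ne_zero_of_finite)]
  have hK_cyclic : IsAddCyclic K :=
    isAddCyclic_right_of_injective_prod (φ := φ.comp e.toAddMonoidHom) (hφ.comp e.injective)
      (card_zmultiples ▸ AddMonoid.exponent_dvd_of_addMonoidHom K.subtype K.subtype_injective)
  rw [← card_K, ← card_zmultiples]
  exact ⟨e.symm.trans
    ((zmodAddCyclicAddEquiv inferInstance).prodCongr (zmodAddCyclicAddEquiv hK_cyclic)).symm⟩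

end CyclicProduct

theorem exponent_eq_lcm_exponent_map_fst_snd {X Y : Type*} [AddGroup X] [AddGroup Y]
    (G : AddSubgroup (X × Y)) :
    AddMonoid.exponent G = Nat.lcm (AddMonoid.exponent (G.map (AddMonoidHom.fst X Y)))
      (AddMonoid.exponent (G.map (AddMonoidHom.snd X Y))) := by
  refine Nat.dvd_antisymm ?_ (Nat.lcm_dvd
    (AddMonoidHom.exponent_dvd ((AddMonoidHom.fst X Y).addSubgroupMap_surjective G))
    (AddMonoidHom.exponent_dvd ((AddMonoidHom.snd X Y).addSubgroupMap_surjective G)))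
  let φ := ((AddMonoidHom.fst X Y).addSubgroupMap G).prod ((AddMonoidHom.snd X Y).addSubgroupMap G)
  have hφ : Function.Injective φ := fun _ _ h => Subtype.ext <| Prod.ext
    (congrArg (fun p => (p.1 : X)) h) (congrArg (fun p => (p.2 : Y)) h)
  have := AddMonoid.exponent_dvd_of_addMonoidHom φ hφ
  rwa [AddMonoid.exponent_prod, lcm_eq_nat_lcm] at this

theorem natCard_inf_ker_mul_natCard_map {Z W : Type*} [AddGroup Z] [AddGroup W]
    (G : AddSubgroup Z) (f : Z →+ W) :
    Nat.card ↥(G ⊓ f.ker) * Nat.card (G.map f) = Nat.card G := by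
  rw [← AddSubgroup.relIndex_ker, ← AddSubgroup.inf_relIndex_left,
    ← AddSubgroup.relIndex_bot_left, ← AddSubgroup.relIndex_bot_left,
    AddSubgroup.relIndex_mul_relIndex _ _ _ bot_le inf_le_left]

theorem natCard_map_eq_natCard_div {Z W : Type*} [AddGroup Z] [AddGroup W]
    (G : AddSubgroup Z) [Finite G] (f : Z →+ W) :
    Nat.card (G.map f) = Nat.card G / Nat.card ↥(G ⊓ f.ker) := by
  have : Finite ↥(G ⊓ f.ker) := Finite.Set.subset (G : Set Z) inf_le_left
  exact Nat.eq_div_of_mul_eq_right Nat.card_pos.ne' (natCard_inf_ker_mul_natCard_map G f)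

theorem exponent_eq_lcm_natCard_div {X Y : Type*} [AddGroup X] [IsAddCyclic X]
    [AddGroup Y] [IsAddCyclic Y] (G : AddSubgroup (X × Y)) [Finite G] :
    AddMonoid.exponent G = Nat.lcm (Nat.card G / Nat.card ↥(G ⊓ (AddMonoidHom.fst X Y).ker))
      (Nat.card G / Nat.card ↥(G ⊓ (AddMonoidHom.snd X Y).ker)) := by
  rw [exponent_eq_lcm_exponent_map_fst_snd, IsAddCyclic.exponent_eq_card,
    IsAddCyclic.exponent_eq_card, natCard_map_eq_natCard_div, natCard_map_eq_natCard_div]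

theorem stmt4_general {X Y X' Y' : Type*}
    [AddCommGroup X] [IsAddCyclic X] [Finite X] [AddCommGroup Y] [IsAddCyclic Y] [Finite Y]
    [AddCommGroup X'] [IsAddCyclic X'] [Finite X'] [AddCommGroup Y'] [IsAddCyclic Y'] [Finite Y']
    (G : AddSubgroup (X × Y)) (G' : AddSubgroup (X' × Y'))
    (hG : Nat.card G = Nat.card G')
    (hA : Nat.card ↥(G ⊓ (AddMonoidHom.snd X Y).ker) =
      Nat.card ↥(G' ⊓ (AddMonoidHom.snd X' Y').ker))
    (hB : Nat.card ↥(G ⊓ (AddMonoidHom.fst X Y).ker) =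
      Nat.card ↥(G' ⊓ (AddMonoidHom.fst X' Y').ker)) :
    Nonempty (G ≃+ G') := by
  have exponent_eq : AddMonoid.exponent G = AddMonoid.exponent G' := by
    rw [exponent_eq_lcm_natCard_div, exponent_eq_lcm_natCard_div, hG, hA, hB]
  obtain ⟨e⟩ := nonempty_addEquiv_zmod_prod_zmod G.subtype_injective
  obtain ⟨e'⟩ := nonempty_addEquiv_zmod_prod_zmod G'.subtype_injective
  rw [← hG, ← exponent_eq] at e'
  exact ⟨e.trans e'.symm⟩

/-- Remark 3.2 of Dalla Volta–Montanucci–Zini: the group-theoretic structure of a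
subgroup `G ≤ ZMod m × ZMod m` is uniquely determined by the parameters
`|G|`, `|A(G)|`, `|B(G)|`, `|C(G)|`. -/
theorem stmt4 (m : ℕ) (hm : 2 ≤ m) (G G' : AddSubgroup (Zgrp m))
    (hG : Nat.card ↥G = Nat.card ↥G')
    (hA : Nat.card ↥(Asub m G) = Nat.card ↥(Asub m G'))
    (hB : Nat.card ↥(Bsub m G) = Nat.card ↥(Bsub m G'))
    (hC : Nat.card ↥(Csub m G) = Nat.card ↥(Csub m G')) :
    Nonempty (↥G ≃+ ↥G') := by
  have : NeZero m := ⟨by omega⟩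
  exact stmt4_general G G' hG hA hB
end

section
/- Let m ≥ 3 be odd and let a, c, e be positive integers with e | m², c | m, a | c, a*c | e, (e/a) | m and gcd(e/(a*c), c/a) = 1. Then there exists a subgroup G of M with |G| = 2e such that: N(G) has order e; π(G) is generated by the transposition swapping the indices 1 and 2 and fixing 3; |N(G) ∩ H₁| = |N(G) ∩ H₂| = a and |N(G) ∩ H₃| = c; and the number of elements of order 2 in G ∖ N(G) equals e/c. -/
/-- `V = (ZMod m)³`, written multiplicatively. -/
abbrev Vgrp (m : ℕ) : Type := Fin 3 → Multiplicative (ZMod m)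

/-- The diagonal embedding `ZMod m → (ZMod m)³`. -/
def diagHom (m : ℕ) : Multiplicative (ZMod m) →* Vgrp m :=
  MonoidHom.mk' (fun t _ => t) (fun _ _ => rfl)

/-- The diagonal subgroup `Δ = {(t,t,t)}` of `(ZMod m)³`. -/
def Δgrp (m : ℕ) : Subgroup (Vgrp m) := (diagHom m).range

/-- `W = (ZMod m)³ ⧸ Δ`. -/
abbrev Wgrp (m : ℕ) : Type := Vgrp m ⧸ Δgrp m

/-- The action of `S₃ = Equiv.Perm (Fin 3)` on `(ZMod m)³` permuting the coordinates. -/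
def permV (m : ℕ) : Equiv.Perm (Fin 3) →* MulAut (Vgrp m) :=
  MonoidHom.mk'
    (fun σ => MulEquiv.arrowCongr σ (MulEquiv.refl (Multiplicative (ZMod m))))
    (fun σ τ => by ext v i; rfl)

lemma permV_map_diag (m : ℕ) (σ : Equiv.Perm (Fin 3)) :
    (Δgrp m).map (permV m σ) = Δgrp m := by
  ext v
  constructor
  · rintro ⟨_, ⟨t, rfl⟩, rfl⟩
    exact ⟨t, rfl⟩
  · rintro ⟨t, rfl⟩
    exact ⟨diagHom m t, ⟨t, rfl⟩, rfl⟩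

/-- The action of `S₃` on `W`, permuting the three coordinates (well defined since
`Δ` is invariant). -/
def permW (m : ℕ) : Equiv.Perm (Fin 3) →* MulAut (Wgrp m) :=
  MonoidHom.mk'
    (fun σ => QuotientGroup.congr (Δgrp m) (Δgrp m) (permV m σ) (permV_map_diag m σ))
    (fun σ τ => by
      ext x
      refine QuotientGroup.induction_on x (fun v => ?_)
      rfl)

/-- `M = W ⋊ S₃`. -/
abbrev Mgrp (m : ℕ) : Type := Wgrp m ⋊[permW m] Equiv.Perm (Fin 3)

/-- `N(G) = G ∩ W`, where `W` is identified with the kernel of the projection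
`π = rightHom : M → S₃` (i.e. with `W × {1} ≤ M`). -/
def NG {m : ℕ} (G : Subgroup (Mgrp m)) : Subgroup (Mgrp m) :=
  G ⊓ (SemidirectProduct.rightHom : Mgrp m →* Equiv.Perm (Fin 3)).ker

/-- The subgroup of `V = (ZMod m)³` of triples whose two coordinates with index
different from `i` are equal. -/
def HV (m : ℕ) (i : Fin 3) : Subgroup (Vgrp m) :=
  MonoidHom.ker (MonoidHom.mk' (fun v : Vgrp m => v (i + 1) / v (i + 2))
    (fun _ _ => mul_div_mul_comm _ _ _ _))

/-- `H_i ≤ W`: classes of triples whose two coordinates with index different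
from `i` are equal. -/
def Hsub (m : ℕ) (i : Fin 3) : Subgroup (Wgrp m) :=
  (HV m i).map (QuotientGroup.mk' (Δgrp m))

/-- `H_i`, identified with the subgroup `H_i × {1}` of `M`. -/
def HsubM (m : ℕ) (i : Fin 3) : Subgroup (Mgrp m) :=
  (Hsub m i).map (SemidirectProduct.inl : Wgrp m →* Mgrp m)

/-
With `N ≅ C_c × C_d` in the coordinates of the `±1`-eigenspaces of the transposition `(0 1)` on `W`,
the group `G = N ⋊ ⟨(0 1)⟩` works for `d = e / c`; the hypotheses on `a`, `c`, `e` say that `c` and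
`d` divide `m` and have greatest common divisor `a`. The element `(p, q)` of `C_c × C_d` stands for
the class of `(p + q, p - q, 0)`, which is a homology with center `P₁`, `P₂`, `P₃` if and only if
`p = q`, `p = -q`, `q = 0` respectively, while the product of this class with the transposition is
an involution if and only if `p = 0`. That `c` and `d` are odd makes `(p, q)` unique and turns
`2 q = 0` and `2 p = 0` into `q = 0` and `p = 0`.
-/

open Pointwise

section SemidirectProduct

variable {N G : Type*} [Group N] [Group G] {φ : G →* MulAut N}

/-- The subgroup `A ⋊ K` of `N ⋊[φ] G`, for subgroups `A ≤ N` and `K ≤ G` such that `K` maps `A`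
to itself. -/
def semidirectSubgroup (A : Subgroup N) (K : Subgroup G)
    (hK : K ≤ (MulAction.stabilizer (MulAut N) A).comap φ) : Subgroup (N ⋊[φ] G) where
  carrier := {x | x.left ∈ A ∧ x.right ∈ K}
  one_mem' := ⟨one_mem A, one_mem K⟩
  mul_mem' := by
    rintro x y ⟨hxA, hxK⟩ ⟨hyA, hyK⟩
    have hφ : φ x.right • A = A := hK hxK
    exact ⟨mul_mem hxA (hφ ▸ Subgroup.smul_mem_pointwise_smul _ _ _ hyA), mul_mem hxK hyK⟩
  inv_mem' := by
    rintro x ⟨hxA, hxK⟩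
    have hφ : φ x.right⁻¹ • A = A := hK (inv_mem hxK)
    exact ⟨hφ ▸ Subgroup.smul_mem_pointwise_smul _ _ _ (inv_mem hxA), inv_mem hxK⟩

variable {A : Subgroup N} {K : Subgroup G}
  (hK : K ≤ (MulAction.stabilizer (MulAut N) A).comap φ)

lemma card_semidirectSubgroup :
    Nat.card (semidirectSubgroup A K hK) = Nat.card A * Nat.card K := by
  rw [← Nat.card_prod]
  exact Nat.card_congr
    { toFun := fun x => (⟨x.1.left, x.2.1⟩, ⟨x.1.right, x.2.2⟩)
      invFun := fun y => ⟨⟨y.1, y.2⟩, y.1.2, y.2.2⟩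
      left_inv := fun _ => rfl
      right_inv := fun _ => rfl }

lemma map_rightHom_semidirectSubgroup :
    (semidirectSubgroup A K hK).map SemidirectProduct.rightHom = K := by
  ext k
  constructor
  · rintro ⟨x, hx, rfl⟩
    exact hx.2
  · intro hk
    exact ⟨SemidirectProduct.inr k, ⟨one_mem A, hk⟩, rfl⟩

lemma semidirectSubgroup_inf_ker_rightHom :
    semidirectSubgroup A K hK ⊓ SemidirectProduct.rightHom.ker =
      A.map SemidirectProduct.inl := by
  ext x
  constructor
  · rintro ⟨hx, hx1⟩
    exact ⟨x.left, hx.1, SemidirectProduct.ext rfl hx1.symm⟩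
  · rintro ⟨n, hn, rfl⟩
    exact ⟨⟨hn, one_mem K⟩, rfl⟩

lemma orderOf_eq_two_iff_of_orderOf_right {x : N ⋊[φ] G} (hx : orderOf x.right = 2) :
    orderOf x = 2 ↔ x.left * φ x.right x.left = 1 := by
  obtain ⟨hsq, hne⟩ := orderOf_eq_prime_iff.1 hx
  have hx1 : x ≠ 1 := fun h => hne (congrArg SemidirectProduct.right h)
  rw [orderOf_eq_prime_iff, and_iff_left hx1, sq, SemidirectProduct.ext_iff]
  exact and_iff_left ((sq x.right).symm.trans hsq)

lemma mem_zpowers_iff_of_orderOf_eq_two {g k : G} (hg : orderOf g = 2) :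
    k ∈ Subgroup.zpowers g ↔ k = 1 ∨ k = g := by
  classical
  have hfin : IsOfFinOrder g := orderOf_pos_iff.1 (by lia)
  rw [hfin.mem_zpowers_iff_mem_range_orderOf, hg]
  simp [Finset.range_add_one, or_comm, eq_comm]

lemma card_involutions_semidirectSubgroup {g : G} (hg : orderOf g = 2)
    (hA : Subgroup.zpowers g ≤ (MulAction.stabilizer (MulAut N) A).comap φ) :
    Nat.card {x : N ⋊[φ] G // x ∈ semidirectSubgroup A (Subgroup.zpowers g) hA ∧
      x.right ≠ 1 ∧ orderOf x = 2} =
    Nat.card {n : N // n ∈ A ∧ n * φ g n = 1} := by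
  have hg1 : g ≠ 1 := (orderOf_eq_prime_iff.1 hg).2
  have right_eq {x : N ⋊[φ] G} (hx : x ∈ semidirectSubgroup A (Subgroup.zpowers g) hA)
      (hx1 : x.right ≠ 1) : x.right = g :=
    ((mem_zpowers_iff_of_orderOf_eq_two hg).1 hx.2).resolve_left hx1
  have order_iff {x : N ⋊[φ] G} (hx : x.right = g) : orderOf x = 2 ↔ x.left * φ g x.left = 1 :=
    hx ▸ orderOf_eq_two_iff_of_orderOf_right (hx ▸ hg)
  exact Nat.card_congr
    { toFun := fun ⟨x, hx, hx1, hx2⟩ => ⟨x.left, hx.1, (order_iff (right_eq hx hx1)).1 hx2⟩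
      invFun := fun ⟨n, hn, hn1⟩ =>
        ⟨⟨n, g⟩, ⟨hn, Subgroup.mem_zpowers g⟩, hg1, (order_iff rfl).2 hn1⟩
      left_inv := fun ⟨_, hx, hx1, _⟩ =>
        Subtype.ext (SemidirectProduct.ext rfl (right_eq hx hx1).symm)
      right_inv := fun ⟨_, _, _⟩ => rfl }

end SemidirectProduct

lemma card_map_inf_of_disjoint_ker {G H : Type*} [Group G] [Group H] {f : G →* H}
    {T : Subgroup G} (hT : Disjoint T f.ker) (S : Subgroup H) :
    Nat.card ↥(T.map f ⊓ S) = Nat.card ↥(T ⊓ S.comap f) := by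
  have hinj : Set.InjOn f (T ⊓ S.comap f : Subgroup G) := by
    intro x hx y hy hxy
    rw [← div_eq_one]
    refine Subgroup.disjoint_def.1 hT (div_mem hx.1 hy.1) ?_
    rw [MonoidHom.mem_ker, map_div, hxy, div_self']
  calc Nat.card ↥(T.map f ⊓ S)
      = Nat.card (f '' (T ∩ f ⁻¹' S)) :=
        congrArg (fun s : Set H => Nat.card s) (Set.image_inter_preimage f T S).symm
    _ = Nat.card ↥(T ⊓ S.comap f) := Nat.card_image_of_injOn hinj

lemma eq_one_of_pow_eq_one_of_sq_eq_one {M : Type*} [Monoid M] {n : ℕ} (hn : Odd n) {x : M}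
    (hx : x ^ n = 1) (hx2 : x ^ 2 = 1) : x = 1 :=
  (pow_eq_one_iff_of_coprime hn.coprime_two_right).1 ⟨hx, hx2⟩

section TorsionPairs

variable {C : Type*} [CommGroup C] {c d : ℕ}

variable (C c d) in
/-- The subgroup of pairs `(p, q)` with `p ^ c = 1` and `q ^ d = 1`, the parameters of
`eigenTorsion`. -/
def torsionPairs : Subgroup (C × C) :=
  (powMonoidHom c : C →* C).ker.prod (powMonoidHom d : C →* C).ker

lemma mk_inv_mem_torsionPairs {p q : C} (h : (p, q) ∈ torsionPairs C c d) :
    (p, q⁻¹) ∈ torsionPairs C c d :=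
  ⟨h.1, Subgroup.inv_mem _ h.2⟩

end TorsionPairs

section Eigenspaces

variable {m c d : ℕ}

variable (m) in
/-- The homomorphism to `W` that sends `(p, q)` to the class of `(p + q, p - q, 0)`. It maps the two
factors into the eigenspaces of the transposition `(0 1)` for the eigenvalues `1` and `-1`. -/
def eigenHom : Multiplicative (ZMod m) × Multiplicative (ZMod m) →* Wgrp m :=
  (QuotientGroup.mk' (Δgrp m)).comp <|
    MonoidHom.mk' (fun x => ![x.1 * x.2, x.1 / x.2, 1]) fun x y => by
      funext i
      fin_cases i
      exacts [mul_mul_mul_comm x.1 y.1 x.2 y.2, mul_div_mul_comm x.1 y.1 x.2 y.2,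
        (mul_one 1).symm]

lemma mem_Δgrp {v : Vgrp m} : v ∈ Δgrp m ↔ v 0 = v 2 ∧ v 1 = v 2 := by
  constructor
  · rintro ⟨t, rfl⟩
    exact ⟨rfl, rfl⟩
  · rintro ⟨h0, h1⟩
    refine ⟨v 2, funext fun i => ?_⟩
    fin_cases i
    exacts [h0.symm, h1.symm, rfl]

lemma Δgrp_le_HV (i : Fin 3) : Δgrp m ≤ HV m i := by
  rintro _ ⟨t, rfl⟩
  exact div_self' t

lemma mk_mem_Hsub {i : Fin 3} {v : Vgrp m} :
    (QuotientGroup.mk v : Wgrp m) ∈ Hsub m i ↔ v (i + 1) = v (i + 2) := by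
  have hcomap : (Hsub m i).comap (QuotientGroup.mk' (Δgrp m)) = HV m i := by
    rw [Hsub, QuotientGroup.comap_map_mk', sup_eq_right.2 (Δgrp_le_HV i)]
  exact (SetLike.ext_iff.1 hcomap v).trans div_eq_one

variable {x : Multiplicative (ZMod m) × Multiplicative (ZMod m)}

lemma eigenHom_eq_one_iff : eigenHom m x = 1 ↔ x.1 * x.2 = 1 ∧ x.1 / x.2 = 1 :=
  (QuotientGroup.eq_one_iff _).trans mem_Δgrp

lemma eigenHom_mem_Hsub_zero : eigenHom m x ∈ Hsub m 0 ↔ x.1 = x.2 :=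
  mk_mem_Hsub.trans div_eq_one

lemma eigenHom_mem_Hsub_one : eigenHom m x ∈ Hsub m 1 ↔ x.1 = x.2⁻¹ :=
  mk_mem_Hsub.trans (eq_comm.trans mul_eq_one_iff_eq_inv)

lemma eigenHom_mem_Hsub_two : eigenHom m x ∈ Hsub m 2 ↔ x.2 ^ 2 = 1 := by
  refine mk_mem_Hsub.trans (?_ : x.1 * x.2 = x.1 / x.2 ↔ _)
  rw [div_eq_mul_inv, mul_right_inj, ← mul_eq_one_iff_eq_inv, sq]

lemma permW_swap_eigenHom :
    permW m (Equiv.swap 0 1) (eigenHom m x) = eigenHom m (x.1, x.2⁻¹) := by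
  refine congrArg (QuotientGroup.mk : Vgrp m → Wgrp m) (funext fun i => ?_)
  fin_cases i
  exacts [div_eq_mul_inv _ _, (div_inv_eq_mul _ _).symm, rfl]

lemma eigenHom_mul_permW_swap :
    eigenHom m x * permW m (Equiv.swap 0 1) (eigenHom m x) = eigenHom m (x.1 ^ 2, 1) := by
  rw [permW_swap_eigenHom, ← map_mul, Prod.mul_def, mul_inv_cancel, sq]

lemma disjoint_torsionPairs_ker_eigenHom (hc : Odd c) :
    Disjoint (torsionPairs (Multiplicative (ZMod m)) c d) (eigenHom m).ker := by
  rw [Subgroup.disjoint_def]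
  rintro ⟨p, q⟩ ⟨hp, -⟩ hpq
  obtain ⟨hmul, hdiv⟩ := eigenHom_eq_one_iff.1 hpq
  obtain rfl : p = q := div_eq_one.1 hdiv
  obtain rfl : p = 1 := eq_one_of_pow_eq_one_of_sq_eq_one hc hp ((sq p).trans hmul)
  rfl

variable (m c d) in
/-- The subgroup `N` of `W` of the classes of `(p + q, p - q, 0)` with `c p = 0` and `d q = 0`; it
is isomorphic to `C_c × C_d` if `c` is odd and `c` and `d` divide `m`. -/
def eigenTorsion : Subgroup (Wgrp m) :=
  (torsionPairs (Multiplicative (ZMod m)) c d).map (eigenHom m)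

lemma card_eigenTorsion_inf (hc : Odd c) (S : Subgroup (Wgrp m)) :
    Nat.card ↥(eigenTorsion m c d ⊓ S) =
      Nat.card ↥(torsionPairs (Multiplicative (ZMod m)) c d ⊓ S.comap (eigenHom m)) :=
  card_map_inf_of_disjoint_ker (disjoint_torsionPairs_ker_eigenHom hc) S

lemma permW_swap_mem_eigenTorsion {w : Wgrp m} (hw : w ∈ eigenTorsion m c d) :
    permW m (Equiv.swap 0 1) w ∈ eigenTorsion m c d := by
  obtain ⟨⟨p, q⟩, hpq, rfl⟩ := hw
  exact ⟨(p, q⁻¹), mk_inv_mem_torsionPairs hpq, (permW_swap_eigenHom (x := (p, q))).symm⟩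

lemma zpowers_swap_le_stabilizer_eigenTorsion :
    Subgroup.zpowers (Equiv.swap 0 1) ≤
      (MulAction.stabilizer (MulAut (Wgrp m)) (eigenTorsion m c d)).comap (permW m) := by
  rw [Subgroup.zpowers_le]
  ext w
  rw [Subgroup.mem_pointwise_smul_iff_inv_smul_mem, ← map_inv, Equiv.swap_inv]
  refine ⟨fun hw => ?_, permW_swap_mem_eigenTorsion⟩
  have hw' := permW_swap_mem_eigenTorsion hw
  rwa [MulAut.smul_def, ← MulAut.mul_apply, ← map_mul, Equiv.swap_mul_self, map_one] at hw'

variable (m c d) in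
/-- The group `G = N ⋊ ⟨(0 1)⟩` for `N = eigenTorsion m c d`. -/
def eigenTorsionSwap : Subgroup (Mgrp m) :=
  semidirectSubgroup (eigenTorsion m c d) (Subgroup.zpowers (Equiv.swap 0 1))
    zpowers_swap_le_stabilizer_eigenTorsion

lemma NG_eigenTorsionSwap :
    NG (eigenTorsionSwap m c d) = (eigenTorsion m c d).map SemidirectProduct.inl :=
  semidirectSubgroup_inf_ker_rightHom _

lemma map_rightHom_eigenTorsionSwap :
    (eigenTorsionSwap m c d).map (SemidirectProduct.rightHom : Mgrp m →* Equiv.Perm (Fin 3)) =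
      Subgroup.zpowers (Equiv.swap (0 : Fin 3) 1) :=
  map_rightHom_semidirectSubgroup _

lemma card_NG_eigenTorsionSwap_inf_HsubM (i : Fin 3) :
    Nat.card ↥(NG (eigenTorsionSwap m c d) ⊓ HsubM m i) =
      Nat.card ↥(eigenTorsion m c d ⊓ Hsub m i) := by
  rw [NG_eigenTorsionSwap, HsubM, ← Subgroup.map_inf _ _ _ SemidirectProduct.inl_injective,
    Subgroup.card_map_of_injective SemidirectProduct.inl_injective]

variable [NeZero m]

lemma card_ker_powMonoidHom_zmod {n : ℕ} (hn : n ∣ m) :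
    Nat.card (powMonoidHom n : Multiplicative (ZMod m) →* Multiplicative (ZMod m)).ker = n := by
  rw [IsCyclic.card_powMonoidHom_ker, Nat.card_congr Multiplicative.toAdd, Nat.card_zmod,
    Nat.gcd_eq_right hn]

lemma card_eigenTorsion (hc : c ∣ m) (hd : d ∣ m) (hc_odd : Odd c) :
    Nat.card (eigenTorsion m c d) = c * d := by
  rw [← inf_top_eq (eigenTorsion m c d), card_eigenTorsion_inf hc_odd, Subgroup.comap_top,
    inf_top_eq, torsionPairs, Nat.card_congr (Subgroup.prodEquiv _ _).toEquiv, Nat.card_prod,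
    card_ker_powMonoidHom_zmod hc, card_ker_powMonoidHom_zmod hd]

lemma card_eigenTorsion_inf_of_comap_eq_map {n : ℕ} (hn : n ∣ m) (hc : Odd c)
    {S : Subgroup (Wgrp m)}
    {g : Multiplicative (ZMod m) →* Multiplicative (ZMod m) × Multiplicative (ZMod m)}
    (hg : Function.Injective g)
    (hS : torsionPairs (Multiplicative (ZMod m)) c d ⊓ S.comap (eigenHom m) =
      (powMonoidHom n).ker.map g) :
    Nat.card ↥(eigenTorsion m c d ⊓ S) = n := by
  rw [card_eigenTorsion_inf hc, hS, Subgroup.card_map_of_injective hg,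
    card_ker_powMonoidHom_zmod hn]

lemma card_eigenTorsion_inf_Hsub_zero (hc : c ∣ m) (hc_odd : Odd c) :
    Nat.card ↥(eigenTorsion m c d ⊓ Hsub m 0) = c.gcd d := by
  refine card_eigenTorsion_inf_of_comap_eq_map ((c.gcd_dvd_left d).trans hc) hc_odd
    (g := (MonoidHom.id _).prod (MonoidHom.id _)) (fun p q h => congrArg Prod.fst h) ?_
  ext ⟨p, q⟩
  constructor
  · rintro ⟨⟨hp, hq⟩, hpq⟩
    obtain rfl : p = q := eigenHom_mem_Hsub_zero.1 hpq
    exact ⟨p, pow_gcd_eq_one.2 ⟨hp, hq⟩, rfl⟩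
  · rintro ⟨r, hr, ⟨⟩⟩
    exact ⟨pow_gcd_eq_one.1 hr, eigenHom_mem_Hsub_zero.2 rfl⟩

lemma card_eigenTorsion_inf_Hsub_one (hc : c ∣ m) (hc_odd : Odd c) :
    Nat.card ↥(eigenTorsion m c d ⊓ Hsub m 1) = c.gcd d := by
  refine card_eigenTorsion_inf_of_comap_eq_map ((c.gcd_dvd_left d).trans hc) hc_odd
    (g := (MonoidHom.id _).prod invMonoidHom) (fun p q h => congrArg Prod.fst h) ?_
  ext ⟨p, q⟩
  constructor
  · rintro ⟨htors, hpq⟩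
    obtain rfl : p = q⁻¹ := eigenHom_mem_Hsub_one.1 hpq
    exact ⟨q⁻¹, pow_gcd_eq_one.2 (mk_inv_mem_torsionPairs htors), Prod.ext rfl (inv_inv q)⟩
  · rintro ⟨r, hr, ⟨⟩⟩
    exact ⟨mk_inv_mem_torsionPairs (pow_gcd_eq_one.1 hr),
      eigenHom_mem_Hsub_one.2 (inv_inv r).symm⟩

lemma card_eigenTorsion_inf_Hsub_two (hc : c ∣ m) (hc_odd : Odd c) (hd_odd : Odd d) :
    Nat.card ↥(eigenTorsion m c d ⊓ Hsub m 2) = c := by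
  refine card_eigenTorsion_inf_of_comap_eq_map hc hc_odd
    (g := MonoidHom.inl _ _) (fun p q h => congrArg Prod.fst h) ?_
  ext ⟨p, q⟩
  constructor
  · rintro ⟨⟨hp, hq⟩, hpq⟩
    obtain rfl : q = 1 :=
      eq_one_of_pow_eq_one_of_sq_eq_one hd_odd hq (eigenHom_mem_Hsub_two.1 hpq)
    exact ⟨p, hp, rfl⟩
  · rintro ⟨r, hr, ⟨⟩⟩
    exact ⟨⟨hr, one_mem _⟩, eigenHom_mem_Hsub_two.2 (one_pow 2)⟩

lemma card_eigenTorsion_inf_ker_mul_permW_swap (hd : d ∣ m) (hc_odd : Odd c) :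
    Nat.card ↥(eigenTorsion m c d ⊓
      (MonoidHom.id (Wgrp m) * (permW m (Equiv.swap 0 1)).toMonoidHom).ker) = d := by
  refine card_eigenTorsion_inf_of_comap_eq_map hd hc_odd
    (g := MonoidHom.inr _ _) (fun p q h => congrArg Prod.snd h) ?_
  ext ⟨p, q⟩
  constructor
  · rintro ⟨⟨hp, hq⟩, hpq⟩
    have hp2 : eigenHom m (p ^ 2, 1) = 1 := eigenHom_mul_permW_swap.symm.trans hpq
    obtain rfl : p = 1 := eq_one_of_pow_eq_one_of_sq_eq_one hc_odd hp
      ((mul_one _).symm.trans (eigenHom_eq_one_iff.1 hp2).1)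
    exact ⟨q, hq, rfl⟩
  · rintro ⟨r, hr, ⟨⟩⟩
    refine ⟨⟨one_mem _, hr⟩, eigenHom_mul_permW_swap.trans ?_⟩
    rw [one_pow]
    exact map_one (eigenHom m)

lemma card_NG_eigenTorsionSwap (hc : c ∣ m) (hd : d ∣ m) (hc_odd : Odd c) :
    Nat.card (NG (eigenTorsionSwap m c d)) = c * d := by
  rw [NG_eigenTorsionSwap, Subgroup.card_map_of_injective SemidirectProduct.inl_injective,
    card_eigenTorsion hc hd hc_odd]

lemma orderOf_swap_zero_one : orderOf (Equiv.swap (0 : Fin 3) 1) = 2 :=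
  orderOf_eq_prime (by decide) (by decide)

lemma card_eigenTorsionSwap (hc : c ∣ m) (hd : d ∣ m) (hc_odd : Odd c) :
    Nat.card (eigenTorsionSwap m c d) = 2 * (c * d) := by
  rw [eigenTorsionSwap, card_semidirectSubgroup, card_eigenTorsion hc hd hc_odd,
    Nat.card_zpowers, orderOf_swap_zero_one, mul_comm]

lemma card_involutions_eigenTorsionSwap (hd : d ∣ m) (hc_odd : Odd c) :
    Nat.card {x : Mgrp m // x ∈ eigenTorsionSwap m c d ∧ x ∉ NG (eigenTorsionSwap m c d) ∧
      orderOf x = 2} = d := by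
  calc _ = Nat.card {x : Mgrp m // x ∈ eigenTorsionSwap m c d ∧ x.right ≠ 1 ∧ orderOf x = 2} :=
        Nat.card_congr <| Equiv.subtypeEquivRight fun x => and_congr_right fun hx =>
          and_congr_left fun _ => not_congr (and_iff_right hx)
    _ = Nat.card {w : Wgrp m // w ∈ eigenTorsion m c d ∧ w * permW m (Equiv.swap 0 1) w = 1} :=
        card_involutions_semidirectSubgroup orderOf_swap_zero_one _
    _ = d := card_eigenTorsion_inf_ker_mul_permW_swap hd hc_odd

end Eigenspaces

lemma exists_eq_mul_and_dvd_and_gcd_eq {m a c e : ℕ} (hc : 0 < c) (hac : a ∣ c)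
    (hace : a * c ∣ e) (hea : e / a ∣ m) (hgcd : (e / (a * c)).gcd (c / a) = 1) :
    ∃ d, e = c * d ∧ d ∣ m ∧ c.gcd d = a := by
  obtain ⟨b, rfl⟩ := hac
  obtain ⟨f, rfl⟩ := hace
  have ha : 0 < a := Nat.pos_of_mul_pos_right hc
  rw [Nat.mul_div_cancel_left f (Nat.mul_pos ha hc), Nat.mul_div_cancel_left b ha] at hgcd
  rw [mul_assoc, Nat.mul_div_cancel_left _ ha] at hea
  refine ⟨a * f, by ring, (mul_dvd_mul_right (dvd_mul_right a b) f).trans hea, ?_⟩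
  rw [Nat.gcd_mul_left, Nat.gcd_comm, hgcd, mul_one]

theorem stmt5_general (m : ℕ) [NeZero m] (a c e : ℕ) (he : Odd e) (hc : c ∣ m) (hac : a ∣ c)
    (hace : a * c ∣ e) (hea : e / a ∣ m) (hgcd : Nat.gcd (e / (a * c)) (c / a) = 1) :
    ∃ G : Subgroup (Mgrp m),
      Nat.card ↥G = 2 * e ∧
      Nat.card ↥(NG G) = e ∧
      G.map (SemidirectProduct.rightHom : Mgrp m →* Equiv.Perm (Fin 3)) =
        Subgroup.zpowers (Equiv.swap (0 : Fin 3) 1) ∧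
      Nat.card ↥(NG G ⊓ HsubM m 0) = a ∧
      Nat.card ↥(NG G ⊓ HsubM m 1) = a ∧
      Nat.card ↥(NG G ⊓ HsubM m 2) = c ∧
      Nat.card {x : Mgrp m // x ∈ G ∧ x ∉ NG G ∧ orderOf x = 2} = e / c := by
  have hc0 : 0 < c := Nat.pos_of_dvd_of_pos hc (NeZero.pos m)
  obtain ⟨d, rfl, hd, rfl⟩ := exists_eq_mul_and_dvd_and_gcd_eq hc0 hac hace hea hgcd
  obtain ⟨hc_odd, hd_odd⟩ := Nat.odd_mul.1 he
  rw [Nat.mul_div_cancel_left d hc0]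
  refine ⟨eigenTorsionSwap m c d, card_eigenTorsionSwap hc hd hc_odd,
    card_NG_eigenTorsionSwap hc hd hc_odd, map_rightHom_eigenTorsionSwap, ?_, ?_, ?_,
    card_involutions_eigenTorsionSwap hd hc_odd⟩ <;>
  rw [card_NG_eigenTorsionSwap_inf_HsubM]
  · exact card_eigenTorsion_inf_Hsub_zero hc hc_odd
  · exact card_eigenTorsion_inf_Hsub_one hc hc_odd
  · exact card_eigenTorsion_inf_Hsub_two hc hc_odd hd_odd

/-- Proposition 3.3(i) of Dalla Volta–Montanucci–Zini (`q` even, `m = q+1` odd):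
existence part, for subgroups `G ≤ (C_{q+1} × C_{q+1}) ⋊ S₃` inducing on the
self-polar triangle the transposition swapping `P₁, P₂` and fixing `P₃`. -/
theorem stmt5 (m : ℕ) (hm : 3 ≤ m) (hmodd : Odd m) (a c e : ℕ)
    (ha0 : 0 < a) (hc0 : 0 < c) (he0 : 0 < e)
    (h1 : e ∣ m ^ 2) (h2 : c ∣ m) (h3 : a ∣ c) (h4 : a * c ∣ e)
    (h5 : e / a ∣ m) (h6 : Nat.gcd (e / (a * c)) (c / a) = 1) :
    ∃ G : Subgroup (Mgrp m),
      Nat.card ↥G = 2 * e ∧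
      Nat.card ↥(NG G) = e ∧
      G.map (SemidirectProduct.rightHom : Mgrp m →* Equiv.Perm (Fin 3)) =
        Subgroup.zpowers (Equiv.swap (0 : Fin 3) 1) ∧
      Nat.card ↥(NG G ⊓ HsubM m 0) = a ∧
      Nat.card ↥(NG G ⊓ HsubM m 1) = a ∧
      Nat.card ↥(NG G ⊓ HsubM m 2) = c ∧
      Nat.card {x : Mgrp m // x ∈ G ∧ x ∉ NG G ∧ orderOf x = 2} = e / c := by
  have : NeZero m := ⟨hmodd.pos.ne'⟩
  exact stmt5_general m a c e (hmodd.pow.of_dvd_nat h1) h2 h3 h4 h5 h6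
end

section
/- Every element of M whose image under π is a 3-cycle of S₃ has order 3. -/
/-
In a semidirect product `N ⋊ G` with `N` commutative, the `n`-th power of `(w, σ)` has left
component `w · σ(w) ⋯ σⁿ⁻¹(w)`. For `N = W` and `σ` a 3-cycle, lift `w` to a triple `v`: each
coordinate of `v · σ(v) · σ²(v)` runs through all three coordinates of `v`, so this product is the
constant triple with value `v₀v₁v₂`, which lies in `Δ`. Hence the cube of `(w, σ)` is trivial,
while the order of `(w, σ)` is a multiple of that of `σ`, which is 3.
-/

section SemidirectProduct

variable {N G : Type*} [CommGroup N] [Group G] {φ : G →* MulAut N}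

theorem semidirectProduct_left_pow (x : N ⋊[φ] G) (n : ℕ) :
    (x ^ n).left = ∏ k ∈ Finset.range n, φ (x.right ^ k) x.left := by
  have right_pow (k : ℕ) : (x ^ k).right = x.right ^ k :=
    map_pow SemidirectProduct.rightHom x k
  induction n with
  | zero => simp
  | succ n ih => rw [pow_succ, SemidirectProduct.mul_left, ih, right_pow, Finset.prod_range_succ]

theorem orderOf_eq_orderOf_right_of_prod_eq_one {x : N ⋊[φ] G}
    (hx : ∏ k ∈ Finset.range (orderOf x.right), φ (x.right ^ k) x.left = 1) :
    orderOf x = orderOf x.right := by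
  refine Nat.dvd_antisymm (orderOf_dvd_of_pow_eq_one ?_)
    (orderOf_map_dvd SemidirectProduct.rightHom x)
  refine SemidirectProduct.ext ?_ ?_
  · rw [semidirectProduct_left_pow, hx, SemidirectProduct.one_left]
  · exact (map_pow SemidirectProduct.rightHom x _).trans (pow_orderOf_eq_one x.right)

end SemidirectProduct

section Cycles

variable {ι : Type*} {σ : Equiv.Perm ι}

theorem prod_pow_apply_of_isCycleOn {A : Type*} [CommMonoid A] {s : Finset ι}
    (hσ : σ.IsCycleOn s) {i : ι} (hi : i ∈ s) (f : ι → A) :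
    ∏ k ∈ Finset.range s.card, f ((σ ^ k) i) = ∏ j ∈ s, f j := by
  refine Finset.prod_nbij (fun k => (σ ^ k) i) ?_ ?_ ?_ (fun _ _ => rfl)
  · exact fun k _ => (hσ.1.perm_pow k).mapsTo hi
  · intro k hk l hl hkl
    exact Nat.ModEq.eq_of_lt_of_lt ((hσ.pow_apply_eq_pow_apply hi).mp hkl)
      (Finset.mem_range.mp hk) (Finset.mem_range.mp hl)
  · intro j hj
    obtain ⟨k, hk, rfl⟩ := hσ.exists_pow_eq hi hj
    exact ⟨k, Finset.mem_coe.mpr (Finset.mem_range.mpr hk), rfl⟩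

theorem isCycleOn_support_of_isCycle [Fintype ι] [DecidableEq ι] (hσ : σ.IsCycle) :
    σ.IsCycleOn σ.support := by
  simpa only [Equiv.Perm.coe_support_eq_set_support] using hσ.isCycleOn

theorem isCycleOn_univ_of_isThreeCycle {σ : Equiv.Perm (Fin 3)} (hσ : σ.IsThreeCycle) :
    σ.IsCycleOn (Finset.univ : Finset (Fin 3)) := by
  have support_eq : σ.support = Finset.univ := Finset.eq_univ_of_card _ hσ.card_support
  exact support_eq ▸ isCycleOn_support_of_isCycle hσ.isCycle

end Cycles

theorem permV_apply (m : ℕ) (σ : Equiv.Perm (Fin 3)) (v : Vgrp m) (i : Fin 3) :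
    permV m σ v i = v (σ⁻¹ i) :=
  rfl

theorem permW_mk (m : ℕ) (σ : Equiv.Perm (Fin 3)) (v : Vgrp m) :
    permW m σ (v : Wgrp m) = (permV m σ v : Wgrp m) :=
  rfl

theorem prod_permV_pow_eq_diagHom (m : ℕ) {σ : Equiv.Perm (Fin 3)} (hσ : σ.IsThreeCycle)
    (v : Vgrp m) : ∏ k ∈ Finset.range 3, permV m (σ ^ k) v = diagHom m (∏ j, v j) := by
  funext i
  calc (∏ k ∈ Finset.range 3, permV m (σ ^ k) v) i
      = ∏ k ∈ Finset.range 3, v ((σ⁻¹ ^ k) i) := by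
        simp only [Finset.prod_apply, permV_apply, inv_pow]
    _ = ∏ j, v j :=
        prod_pow_apply_of_isCycleOn (isCycleOn_univ_of_isThreeCycle hσ.inv) (Finset.mem_univ i) v

theorem prod_permW_pow_eq_one (m : ℕ) {σ : Equiv.Perm (Fin 3)} (hσ : σ.IsThreeCycle)
    (w : Wgrp m) : ∏ k ∈ Finset.range 3, permW m (σ ^ k) w = 1 := by
  obtain ⟨v, rfl⟩ := QuotientGroup.mk_surjective w
  calc ∏ k ∈ Finset.range 3, permW m (σ ^ k) (v : Wgrp m)
      = ((∏ k ∈ Finset.range 3, permV m (σ ^ k) v : Vgrp m) : Wgrp m) := by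
        simp only [permW_mk, QuotientGroup.mk_prod]
    _ = (diagHom m (∏ j, v j) : Wgrp m) := by rw [prod_permV_pow_eq_diagHom m hσ]
    _ = 1 := (QuotientGroup.eq_one_iff _).mpr ⟨_, rfl⟩

/-- From the proofs of Propositions 3.5 and 3.6 of Dalla Volta–Montanucci–Zini:
every element of `M = W ⋊ S₃` projecting to a 3-cycle of `S₃` has order 3. -/
theorem stmt7 (m : ℕ) (hm : 2 ≤ m) (x : Mgrp m)
    (hx : (SemidirectProduct.rightHom x : Equiv.Perm (Fin 3)).IsThreeCycle) :
    orderOf x = 3 := by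
  have orderOf_right : orderOf x.right = 3 := hx.orderOf
  have prod_eq_one :
      ∏ k ∈ Finset.range (orderOf x.right), permW m (x.right ^ k) x.left = 1 := by
    rw [orderOf_right]
    exact prod_permW_pow_eq_one m hx x.left
  exact (orderOf_eq_orderOf_right_of_prod_eq_one prod_eq_one).trans orderOf_right
end

section
/- Let m ≥ 2 be even and let ℓ, a, c, e be positive integers with e | m², c | m, ℓ | c, a | c, a*c | e, (e/a) | m, gcd(e/(a*c), c/a) = 1, and such that e/(a*c) is odd whenever 2 | a or 2 ∤ c. Then there exists a subgroup G of M with |G| = 2e such that: N(G) has order e; π(G) is generated by the transposition swapping the indices 1 and 2 and fixing 3; |N(G) ∩ H₁| = |N(G) ∩ H₂| = a and |N(G) ∩ H₃| = c; G ∖ N(G) contains an element of order 2ℓ; and, writing h for the number of elements of order 2 in G ∖ N(G) and k for the number of elements of G ∖ N(G) whose order does not divide m, one has (h,k) = (e/c, e/2) if 2a ∤ m; (h,k) = (e/c, 0) if 2a | m and 2a ∤ c; (h,k) = (0, e) if 2a | c and 2ℓ ∤ m; (h,k) = (0, 0) if 2a | c, 2ℓ | m and 2ℓ ∤ c; and (h,k)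 = (2e/c, 0) if 2a | c and 2ℓ | c. -/
/-!
Write `c = a * p` and `e = a ^ 2 * p * q`; then `p` and `q` are coprime and `q` is odd. In the
coordinates `(x, y) ↦ [x, y, 0]` of `W` the transposition `τ` of the first two indices acts by
`(x, y) ↦ (y, x)`, and `H₁`, `H₂`, `H₃` are the two axes and the diagonal. Let `N` consist of the
pairs `(x, y)` for which `a * p * q` kills `x`, `a * q` kills `x - y` and `a * p` kills `x + y`.
It is stable under `τ`, has order `e`, and meets `H₁`, `H₂`, `H₃` in `a`, `a` and `c` elements.

If `s` has order `l`, the square of `β = [s, 0, 0] τ` is `[s, s, 0] ∈ N`, so `G = N ∪ N β` is a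
group. The square of `[x, y, 0] β` is `[t, t, 0]` with `t = x + y + s`, so that its order is twice
the order of `t`. Since `ZMod m` is cyclic, the image of `N` under `(x, y) ↦ x + y` is determined by
its cardinality: it is the `a * p / gcd p 2`-torsion. The numbers `h` and `k` are therefore sums of
sizes of fibres of this map, and the five cases reflect the parity of `p` and the order of `s`.
-/

section Subgroups

variable {G H : Type*} [Group G] [Group H]

@[to_additive card_addSubgroup_map_mul_card_inf_ker]
lemma card_subgroup_map_mul_card_inf_ker (f : G →* H) (K : Subgroup G) :
    Nat.card (K.map f) * Nat.card ↥(K ⊓ f.ker) = Nat.card K := by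
  rw [← Subgroup.relIndex_ker, ← Subgroup.inf_relIndex_right, inf_comm, mul_comm,
    ← Subgroup.relIndex_bot_left, Subgroup.relIndex_mul_relIndex _ _ _ bot_le inf_le_left,
    Subgroup.relIndex_bot_left]

lemma mem_sup_zpowers_iff_of_sq_mem {N : Subgroup G} {β : G}
    (hconj : ∀ n ∈ N, β * n * β⁻¹ ∈ N) (hsq : β ^ 2 ∈ N) {g : G} :
    g ∈ N ⊔ Subgroup.zpowers β ↔ g ∈ N ∨ ∃ n ∈ N, n * β = g := by
  have hnormalizer : β ∈ Subgroup.normalizer (N : Set G) := by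
    refine Subgroup.mem_normalizer_iff.2 fun n => ⟨hconj n, fun h => ?_⟩
    have hconj_sq : β ^ 2 * n * (β ^ 2)⁻¹ ∈ N := by
      simpa only [pow_two, mul_inv_rev, mul_assoc] using hconj _ h
    rwa [N.mul_mem_cancel_right (N.inv_mem hsq), N.mul_mem_cancel_left hsq] at hconj_sq
  constructor
  · rw [← SetLike.mem_coe, Subgroup.coe_mul_of_right_le_normalizer_left N _
      (Subgroup.zpowers_le.2 hnormalizer)]
    rintro ⟨n, hn, _, ⟨k, rfl⟩, rfl⟩
    have hpow (j : ℤ) : n * β ^ (2 * j) ∈ N := by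
      rw [zpow_mul]
      exact N.mul_mem hn (N.zpow_mem (mod_cast hsq) j)
    rcases Int.even_or_odd' k with ⟨j, rfl | rfl⟩
    · exact .inl (hpow j)
    · exact .inr ⟨_, hpow j, by simp only [zpow_add_one, mul_assoc]⟩
  · rintro (h | ⟨n, hn, rfl⟩)
    · exact Subgroup.mem_sup_left h
    · exact Subgroup.mul_mem_sup hn (Subgroup.mem_zpowers β)

end Subgroups

section Fibers

variable {A B : Type*} [AddGroup A] [AddGroup B]

lemma card_inf_range_of_injective {f : A →+ B} (hf : Function.Injective f) (K : AddSubgroup B) :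
    Nat.card ↥(K ⊓ f.range) = Nat.card (K.comap f) := by
  rw [inf_comm, ← AddSubgroup.map_comap_eq, AddSubgroup.card_map_of_injective hf]

lemma card_mem_and_apply_eq_of_mem_map {f : A →+ B} {K : AddSubgroup A} {b : B}
    (hb : b ∈ K.map f) : Nat.card {x // x ∈ K ∧ f x = b} = Nat.card ↥(K ⊓ f.ker) := by
  obtain ⟨x₀, hx₀, rfl⟩ := hb
  refine Nat.card_congr ((Equiv.addLeft (-x₀)).subtypeEquiv fun x => ?_)
  rw [Equiv.coe_addLeft, AddSubgroup.mem_inf, AddMonoidHom.mem_ker, map_add, map_neg,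
    neg_add_eq_zero, K.add_mem_cancel_left (K.neg_mem hx₀), eq_comm (a := f x)]

lemma two_mul_card_mem_and_apply_ne [Finite A] {f : A →+ B} {K : AddSubgroup A} {b : B}
    (hb : b ∈ K.map f) (hK : Nat.card (K.map f) = 2) :
    2 * Nat.card {x // x ∈ K ∧ f x ≠ b} = Nat.card K := by
  classical
  have hfiber : 2 * Nat.card {x // x ∈ K ∧ f x = b} = Nat.card K := by
    rw [card_mem_and_apply_eq_of_mem_map hb, ← hK, card_addSubgroup_map_mul_card_inf_ker]
  have hsplit : Nat.card {x // x ∈ K ∧ f x = b} + Nat.card {x // x ∈ K ∧ f x ≠ b} =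
      Nat.card K := by
    rw [← Nat.card_congr (Equiv.subtypeSubtypeEquivSubtypeInter (· ∈ K) (f · = b)),
      ← Nat.card_congr (Equiv.subtypeSubtypeEquivSubtypeInter (· ∈ K) (f · ≠ b)),
      ← Nat.card_sum]
    exact Nat.card_congr (Equiv.sumCompl fun x : K => f x = b)
  lia

end Fibers

section Torsion

open scoped AddSubgroup

variable {A : Type*} [AddCommGroup A]

lemma torsionBy_inf_torsionBy_s8 (d₁ d₂ : ℕ) : A[d₁] ⊓ A[d₂] = A[Nat.gcd d₁ d₂] := by
  ext x
  simp only [AddSubgroup.mem_inf, AddSubgroup.torsionBy.nsmul_iff,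
    ← addOrderOf_dvd_iff_nsmul_eq_zero, Nat.dvd_gcd_iff]

lemma ker_nsmulAddMonoidHom (n : ℕ) : (nsmulAddMonoidHom n : A →+ A).ker = A[n] := by
  ext x
  exact AddSubgroup.torsionBy.nsmul_iff.symm

variable [IsAddCyclic A] [Finite A]

lemma card_torsionBy {d : ℕ} (hd : d ∣ Nat.card A) : Nat.card A[d] = d := by
  rw [← ker_nsmulAddMonoidHom, IsAddCyclic.card_nsmulAddMonoidHom_ker, Nat.gcd_eq_right hd]

lemma eq_torsionBy_card (H : AddSubgroup A) : H = A[Nat.card H] := by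
  refine AddSubgroup.eq_of_le_of_card_ge (fun x hx => ?_)
    (card_torsionBy H.card_addSubgroup_dvd_card).le
  exact AddSubgroup.torsionBy.nsmul_iff.2
    (congrArg Subtype.val (card_nsmul_eq_zero' (x := (⟨x, hx⟩ : H))))

lemma card_map_nsmul_torsionBy_of_dvd_two_mul {d n : ℕ} (hd : d ∣ Nat.card A) (hdn : d ∣ 2 * n)
    (hnd : ¬ d ∣ n) : Nat.card (A[d].map (nsmulAddMonoidHom n)) = 2 := by
  have hcard := card_addSubgroup_map_mul_card_inf_ker (nsmulAddMonoidHom n) A[d]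
  rw [ker_nsmulAddMonoidHom, torsionBy_inf_torsionBy_s8, card_torsionBy hd,
    card_torsionBy ((Nat.gcd_dvd_left d n).trans hd)] at hcard
  have hgcd : d ∣ 2 * Nat.gcd d n := by
    rw [← Nat.gcd_mul_left]
    exact Nat.dvd_gcd (Dvd.intro_left _ rfl) hdn
  have hpos : 0 < Nat.gcd d n := Nat.gcd_pos_of_pos_left _ (Nat.pos_of_dvd_of_pos hd Nat.card_pos)
  nth_rw 1 [← hcard] at hgcd
  refine ((Nat.dvd_prime Nat.prime_two).1 (Nat.dvd_of_mul_dvd_mul_right hpos hgcd)).resolve_left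
    fun h1 => hnd ?_
  rw [h1, one_mul] at hcard
  exact hcard ▸ Nat.gcd_dvd_right d n

lemma exists_addOrderOf_eq_of_dvd_card {d : ℕ} (hd : d ∣ Nat.card A) :
    ∃ x : A, addOrderOf x = d := by
  obtain ⟨g, hg⟩ := IsAddCyclic.exists_ofOrder_eq_natCard (α := A)
  exact ⟨_, addOrderOf_nsmul_addOrderOf_sub (addOrderOf_pos g).ne' (hg ▸ hd)⟩

end Torsion

section TwistedTorsion

open AddMonoidHom (fst snd inl inr)

open scoped AddSubgroup

variable (A : Type*) [AddCommGroup A] {a p q : ℕ}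

/-- The analogue over `A` of the group `N(G)`, in the coordinates `(x, y) ↦ [x, y, 0]` of `W`: the
pairs `(x, y)` with `x` of `a * p * q`-torsion such that `y` is `x` up to `a * q`-torsion and `-x`
up to `a * p`-torsion. -/
def twistedTorsion (a p q : ℕ) : AddSubgroup (A × A) :=
  A[(a * p * q : ℕ)].comap (fst A A) ⊓ A[(a * q : ℕ)].comap (fst A A - snd A A) ⊓
    A[(a * p : ℕ)].comap (fst A A + snd A A)

variable {A}

lemma mem_twistedTorsion {x : A × A} : x ∈ twistedTorsion A a p q ↔
    (a * p * q) • x.1 = 0 ∧ (a * q) • (x.1 - x.2) = 0 ∧ (a * p) • (x.1 + x.2) = 0 := by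
  simp only [twistedTorsion, AddSubgroup.mem_inf, AddSubgroup.mem_comap, and_assoc,
    AddSubgroup.torsionBy.nsmul_iff]
  rfl

lemma swap_mem_twistedTorsion {x : A × A} (hx : x ∈ twistedTorsion A a p q) :
    x.swap ∈ twistedTorsion A a p q := by
  rw [mem_twistedTorsion] at *
  obtain ⟨h1, h2, h3⟩ := hx
  refine ⟨?_, ?_, ?_⟩
  · linear_combination (norm := (dsimp; module)) h1 - p • h2
  · linear_combination (norm := (dsimp; module)) -h2
  · linear_combination (norm := (dsimp; module)) h3

lemma comap_inl_twistedTorsion (hpq : Nat.Coprime p q) :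
    (twistedTorsion A a p q).comap (inl A A) = A[a] := by
  ext x
  have hgcd : Nat.gcd (a * p * q) (Nat.gcd (a * q) (a * p)) = a := by
    rw [Nat.gcd_mul_left, hpq.symm.gcd_eq_one, mul_one, mul_assoc, Nat.gcd_mul_right_left]
  rw [AddSubgroup.torsionBy.nsmul_iff, ← addOrderOf_dvd_iff_nsmul_eq_zero]
  conv_rhs => rw [← hgcd]
  simp only [AddSubgroup.mem_comap, mem_twistedTorsion, AddMonoidHom.inl_apply, sub_zero,
    add_zero, Nat.dvd_gcd_iff, addOrderOf_dvd_iff_nsmul_eq_zero]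

lemma comap_inr_twistedTorsion (hpq : Nat.Coprime p q) :
    (twistedTorsion A a p q).comap (inr A A) = A[a] := by
  rw [← comap_inl_twistedTorsion hpq]
  ext x
  exact ⟨swap_mem_twistedTorsion, swap_mem_twistedTorsion⟩

lemma comap_diag_twistedTorsion (hq : Odd q) :
    (twistedTorsion A a p q).comap ((AddMonoidHom.id A).prod (AddMonoidHom.id A)) =
      A[(a * p : ℕ)] := by
  ext x
  have hgcd : Nat.gcd (a * p * q) (a * p * 2) = a * p := by
    rw [Nat.gcd_mul_left, (Nat.coprime_two_right.2 hq).gcd_eq_one, mul_one]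
  rw [AddSubgroup.torsionBy.nsmul_iff, ← addOrderOf_dvd_iff_nsmul_eq_zero, ← hgcd]
  simp only [AddSubgroup.mem_comap, mem_twistedTorsion, AddMonoidHom.prod_apply,
    AddMonoidHom.id_apply, sub_self, smul_zero, true_and, ← two_nsmul, ← mul_nsmul',
    Nat.dvd_gcd_iff, addOrderOf_dvd_iff_nsmul_eq_zero]

lemma diag_mem_twistedTorsion (hq : Odd q) {s : A} (hs : addOrderOf s ∣ a * p) :
    (s, s) ∈ twistedTorsion A a p q := by
  have hs' : s ∈ A[(a * p : ℕ)] :=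
    AddSubgroup.torsionBy.nsmul_iff.2 (addOrderOf_dvd_iff_nsmul_eq_zero.1 hs)
  rwa [← comap_diag_twistedTorsion hq] at hs'

lemma comap_antidiag_twistedTorsion :
    (twistedTorsion A a p q).comap ((AddMonoidHom.id A).prod (-AddMonoidHom.id A)) =
      A[(a * q * Nat.gcd p 2 : ℕ)] := by
  ext x
  rw [AddSubgroup.torsionBy.nsmul_iff, ← addOrderOf_dvd_iff_nsmul_eq_zero, ← Nat.gcd_mul_left,
    mul_right_comm]
  simp only [AddSubgroup.mem_comap, mem_twistedTorsion, AddMonoidHom.prod_apply,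
    AddMonoidHom.neg_apply, AddMonoidHom.id_apply, sub_neg_eq_add, add_neg_cancel, smul_zero,
    and_true, ← two_nsmul, ← mul_nsmul', Nat.dvd_gcd_iff, addOrderOf_dvd_iff_nsmul_eq_zero]

lemma map_fst_twistedTorsion (hpq : Nat.Coprime p q) :
    (twistedTorsion A a p q).map (fst A A) = A[(a * p * q : ℕ)] := by
  ext x
  rw [AddSubgroup.torsionBy.nsmul_iff]
  constructor
  · rintro ⟨y, hy, rfl⟩
    exact (mem_twistedTorsion.1 hy).1
  · intro hx
    obtain ⟨u, v, huv⟩ := Nat.isCoprime_iff_coprime.2 hpq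
    refine ⟨(x, x - (2 * u * p) • x), mem_twistedTorsion.2 ⟨hx, ?_, ?_⟩, rfl⟩
    · linear_combination (norm := (dsimp; module)) (2 * u) • hx
    · have hbezout : x = (u * p + v * q) • x := by rw [huv, one_smul]
      linear_combination (norm := (dsimp; module)) (2 * v) • hx + (2 * a * p) • hbezout

variable [IsAddCyclic A] [Finite A]

lemma card_comap_inl_twistedTorsion (hpq : Nat.Coprime p q) (hA : a * p * q ∣ Nat.card A) :
    Nat.card ((twistedTorsion A a p q).comap (inl A A)) = a := by
  rw [comap_inl_twistedTorsion hpq, card_torsionBy]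
  exact (Dvd.intro _ (mul_assoc a p q).symm).trans hA

lemma card_comap_inr_twistedTorsion (hpq : Nat.Coprime p q) (hA : a * p * q ∣ Nat.card A) :
    Nat.card ((twistedTorsion A a p q).comap (inr A A)) = a := by
  rw [comap_inr_twistedTorsion hpq, card_torsionBy]
  exact (Dvd.intro _ (mul_assoc a p q).symm).trans hA

lemma card_comap_diag_twistedTorsion (hq : Odd q) (hA : a * p * q ∣ Nat.card A) :
    Nat.card ((twistedTorsion A a p q).comap
      ((AddMonoidHom.id A).prod (AddMonoidHom.id A))) = a * p := by
  rw [comap_diag_twistedTorsion hq, card_torsionBy ((Dvd.intro _ rfl).trans hA)]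

lemma card_twistedTorsion (hpq : Nat.Coprime p q) (hA : a * p * q ∣ Nat.card A) :
    Nat.card (twistedTorsion A a p q) = a * p * (a * q) := by
  have hker : (fst A A).ker = (inr A A).range := by
    ext ⟨x, y⟩
    simp [AddMonoidHom.ker_fst, AddSubgroup.mem_prod, eq_comm]
  rw [← card_addSubgroup_map_mul_card_inf_ker (fst A A), map_fst_twistedTorsion hpq,
    card_torsionBy hA, hker, card_inf_range_of_injective (Prod.mk_right_injective 0),
    card_comap_inr_twistedTorsion hpq hA, mul_assoc, mul_comm q]

lemma card_twistedTorsion_inf_ker_add (hA : a * p * q ∣ Nat.card A) :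
    Nat.card ↥(twistedTorsion A a p q ⊓ (fst A A + snd A A).ker) = a * q * Nat.gcd p 2 := by
  have hker : (fst A A + snd A A).ker =
      ((AddMonoidHom.id A).prod (-AddMonoidHom.id A)).range := by
    ext ⟨x, y⟩
    simp [add_eq_zero_iff_neg_eq]
  rw [hker, card_inf_range_of_injective fun x y h => congrArg Prod.fst h,
    comap_antidiag_twistedTorsion, card_torsionBy]
  refine .trans ?_ hA
  rw [mul_right_comm a p q]
  exact Nat.mul_dvd_mul_left _ (Nat.gcd_dvd_left p 2)

lemma map_add_twistedTorsion (hpq : Nat.Coprime p q) (hA : a * p * q ∣ Nat.card A) :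
    (twistedTorsion A a p q).map (fst A A + snd A A) = A[(a * (p / Nat.gcd p 2) : ℕ)] := by
  have hcard := card_addSubgroup_map_mul_card_inf_ker (fst A A + snd A A)
    (twistedTorsion A a p q)
  rw [card_twistedTorsion hpq hA, card_twistedTorsion_inf_ker_add hA] at hcard
  rw [eq_torsionBy_card (AddSubgroup.map _ _)]
  congr 2
  have hpos : 0 < a * q * Nat.gcd p 2 := card_twistedTorsion_inf_ker_add hA ▸ Nat.card_pos
  refine Nat.eq_of_mul_eq_mul_right hpos (hcard.trans ?_)
  calc a * p * (a * q) = a * q * a * (p / Nat.gcd p 2 * Nat.gcd p 2) := by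
        rw [Nat.div_mul_cancel (Nat.gcd_dvd_left p 2)]; ring
    _ = a * (p / Nat.gcd p 2) * (a * q * Nat.gcd p 2) := by ring

end TwistedTorsion

section Coordinates

open Multiplicative (ofAdd toAdd)

open SemidirectProduct (rightHom)

variable (m : ℕ)

/-- The isomorphism `(x, y) ↦ [x, y, 0]` of `(ZMod m)²` onto the normal subgroup `W` of `M`. -/
def translation : Multiplicative (ZMod m × ZMod m) →* Mgrp m :=
  SemidirectProduct.inl.comp ((QuotientGroup.mk' (Δgrp m)).comp
    (MonoidHom.mk' (fun x => ![ofAdd (toAdd x).1, ofAdd (toAdd x).2, 1]) fun x y => by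
      ext i
      fin_cases i <;> simp))

lemma inl_mk_eq_translation (v : Vgrp m) :
    (SemidirectProduct.inl (v : Wgrp m) : Mgrp m) =
      translation m (ofAdd (toAdd (v 0 / v 2), toAdd (v 1 / v 2))) := by
  refine congrArg SemidirectProduct.inl (QuotientGroup.eq.2 ⟨(v 2)⁻¹, ?_⟩)
  ext i
  fin_cases i <;> simp [diagHom] <;> abel

lemma translation_injective : Function.Injective (translation m) := by
  rw [injective_iff_map_eq_one]
  intro x hx
  obtain ⟨t, ht⟩ := (QuotientGroup.eq_one_iff _).1 (SemidirectProduct.inl_injective hx)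
  have h2 : t = 1 := congrFun ht 2
  have h0 : t = ofAdd (toAdd x).1 := congrFun ht 0
  have h1 : t = ofAdd (toAdd x).2 := congrFun ht 1
  exact Prod.ext (h0.symm.trans h2) (h1.symm.trans h2)

/-- The embedding `ZMod m → (ZMod m)²` whose range is the subgroup `H_i` of homologies in the
coordinates given by `translation`. The indices `1, 2, 3` are encoded as `0, 1, 2`. -/
def axis : Fin 3 → ZMod m →+ ZMod m × ZMod m :=
  ![AddMonoidHom.inl _ _, AddMonoidHom.inr _ _,
    (AddMonoidHom.id _).prod (AddMonoidHom.id _)]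

lemma axis_injective (i : Fin 3) : Function.Injective (axis m i) := by
  fin_cases i
  · exact Prod.mk_left_injective 0
  · exact Prod.mk_right_injective 0
  · exact fun x y h => congrArg Prod.fst h

lemma mem_HV_iff (i : Fin 3) (v : Vgrp m) :
    v ∈ HV m i ↔ (toAdd (v 0 / v 2), toAdd (v 1 / v 2)) ∈ (axis m i).range := by
  rw [show v ∈ HV m i ↔ v (i + 1) = v (i + 2) from div_eq_one]
  fin_cases i <;>
    simp [axis, @eq_comm _ (0 : ZMod m), sub_eq_zero, @eq_comm _ (v 2) (v 0)]

lemma HsubM_eq_map_range_axis (i : Fin 3) :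
    HsubM m i = (AddSubgroup.toSubgroup (axis m i).range).map (translation m) := by
  ext g
  constructor
  · rintro ⟨_, ⟨v, hv, rfl⟩, rfl⟩
    exact ⟨_, (mem_HV_iff m i v).1 hv, (inl_mk_eq_translation m v).symm⟩
  · rintro ⟨x, hx, rfl⟩
    refine ⟨_, ⟨_, (mem_HV_iff m i _).2 ?_, rfl⟩, rfl⟩
    simpa using hx

variable {m}

/-- The element `[x.1, x.2, 0] τ` of `M`, where `τ` is the transposition of the first two
indices. -/
def reflection (x : ZMod m × ZMod m) : Mgrp m :=
  translation m (ofAdd x) * SemidirectProduct.inr (Equiv.swap 0 1)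

lemma rightHom_translation (x : Multiplicative (ZMod m × ZMod m)) :
    rightHom (translation m x) = 1 :=
  rfl

lemma rightHom_reflection (x : ZMod m × ZMod m) :
    rightHom (reflection x) = Equiv.swap (0 : Fin 3) 1 := by
  rw [reflection, map_mul, rightHom_translation, SemidirectProduct.rightHom_inr, one_mul]

lemma translation_mul_reflection (x y : ZMod m × ZMod m) :
    translation m (ofAdd x) * reflection y = reflection (x + y) := by
  rw [reflection, reflection, ofAdd_add, map_mul, mul_assoc]

lemma reflection_injective : Function.Injective (reflection (m := m)) := fun _ _ h =>
  ofAdd.injective (translation_injective m (mul_right_cancel h))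

lemma inr_swap_mul_translation (x : ZMod m × ZMod m) :
    SemidirectProduct.inr (Equiv.swap 0 1) * translation m (ofAdd x) =
      translation m (ofAdd x.swap) * SemidirectProduct.inr (Equiv.swap 0 1) := by
  have hperm : permV m (Equiv.swap 0 1) ![ofAdd x.1, ofAdd x.2, 1] =
      ![ofAdd x.2, ofAdd x.1, 1] := by
    ext i
    fin_cases i <;> rfl
  rw [← mul_inv_eq_iff_eq_mul, ← map_inv]
  refine (SemidirectProduct.inl_aut _ _).symm.trans ?_
  exact congrArg (fun v : Vgrp m => (SemidirectProduct.inl (v : Wgrp m) : Mgrp m)) hperm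

lemma reflection_mul_translation (x y : ZMod m × ZMod m) :
    reflection x * translation m (ofAdd y) = translation m (ofAdd y.swap) * reflection x := by
  rw [translation_mul_reflection, reflection, reflection, mul_assoc, inr_swap_mul_translation,
    ← mul_assoc, ← map_mul, ← ofAdd_add, add_comm]

lemma reflection_sq (x : ZMod m × ZMod m) :
    reflection x ^ 2 = translation m (ofAdd (x + x.swap)) := by
  rw [pow_two]
  nth_rw 2 [reflection]
  rw [← mul_assoc, reflection_mul_translation, translation_mul_reflection, reflection, mul_assoc,
    ← map_mul, Equiv.swap_mul_self, map_one, mul_one, add_comm]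

lemma orderOf_reflection (x : ZMod m × ZMod m) :
    orderOf (reflection x) = 2 * addOrderOf (x.1 + x.2) := by
  have hsq : orderOf (reflection x ^ 2) = addOrderOf (x.1 + x.2) := by
    rw [reflection_sq, orderOf_injective _ (translation_injective m),
      orderOf_ofAdd_eq_addOrderOf, Prod.addOrderOf, Prod.fst_add, Prod.snd_add, Prod.fst_swap,
      Prod.snd_swap, add_comm x.2, Nat.lcm_self]
  have heven : 2 ∣ orderOf (reflection x) := by
    have := orderOf_map_dvd rightHom (reflection x)
    rwa [rightHom_reflection, (Equiv.Perm.swap_isSwap_iff.2 zero_ne_one).orderOf] at this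
  rw [← hsq, orderOf_pow_of_dvd two_ne_zero heven, Nat.mul_div_cancel' heven]

end Coordinates

section SwapExtension

open Multiplicative (ofAdd)

open SemidirectProduct (rightHom)

variable {m : ℕ} (N : AddSubgroup (ZMod m × ZMod m)) (s : ZMod m)

/-- The subgroup `⟨N, β⟩` of `M` for `β = reflection (s, 0)` and a subgroup `N` of `W`, given in the
coordinates of `translation`. It is `N ∪ N β` when `N` is stable under `Prod.swap` and contains
`(s, s)`. -/
def swapExtension : Subgroup (Mgrp m) :=
  (AddSubgroup.toSubgroup N).map (translation m) ⊔ Subgroup.zpowers (reflection (s, 0))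

variable {N s}

lemma reflection_mem_swapExtension : reflection (s, 0) ∈ swapExtension N s :=
  Subgroup.mem_sup_right (Subgroup.mem_zpowers _)

lemma map_rightHom_swapExtension :
    (swapExtension N s).map rightHom = Subgroup.zpowers (Equiv.swap (0 : Fin 3) 1) := by
  have htranslation : ((AddSubgroup.toSubgroup N).map (translation m)).map rightHom = ⊥ := by
    rw [Subgroup.map_eq_bot_iff, Subgroup.map_le_iff_le_comap]
    exact fun x _ => rightHom_translation x
  rw [swapExtension, Subgroup.map_sup, htranslation, bot_sup_eq, MonoidHom.map_zpowers,
    rightHom_reflection]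

lemma reflection_notMem_NG (G : Subgroup (Mgrp m)) (x : ZMod m × ZMod m) :
    reflection x ∉ NG G := by
  rw [NG, Subgroup.mem_inf, MonoidHom.mem_ker, rightHom_reflection]
  exact fun h => absurd h.2 (by decide)

variable (hN : ∀ x ∈ N, x.swap ∈ N) (hs : (s, s) ∈ N)

include hN hs

lemma mem_swapExtension {g : Mgrp m} :
    g ∈ swapExtension N s ↔ g ∈ (AddSubgroup.toSubgroup N).map (translation m) ∨
      ∃ x ∈ N, reflection (x + (s, 0)) = g := by
  rw [swapExtension, mem_sup_zpowers_iff_of_sq_mem]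
  · simp only [← translation_mul_reflection]
    refine or_congr_right ⟨?_, fun ⟨x, hx, hg⟩ => ⟨_, ⟨ofAdd x, hx, rfl⟩, hg⟩⟩
    rintro ⟨_, ⟨x, hx, rfl⟩, rfl⟩
    exact ⟨x.toAdd, hx, rfl⟩
  · rintro _ ⟨x, hx, rfl⟩
    rw [← ofAdd_toAdd x, reflection_mul_translation, mul_inv_cancel_right]
    exact ⟨_, hN _ hx, rfl⟩
  · rw [reflection_sq]
    refine ⟨_, ?_, rfl⟩
    simpa using hs

lemma NG_swapExtension :
    NG (swapExtension N s) = (AddSubgroup.toSubgroup N).map (translation m) := by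
  ext g
  constructor
  · intro hg
    rcases (mem_swapExtension hN hs).1 hg.1 with h | ⟨x, -, rfl⟩
    · exact h
    · exact absurd hg (reflection_notMem_NG _ _)
  · rintro ⟨x, hx, rfl⟩
    exact ⟨(mem_swapExtension hN hs).2 (.inl ⟨x, hx, rfl⟩), rightHom_translation x⟩

lemma mem_swapExtension_and_notMem_NG {g : Mgrp m} :
    g ∈ swapExtension N s ∧ g ∉ NG (swapExtension N s) ↔
      ∃ x ∈ N, reflection (x + (s, 0)) = g := by
  rw [mem_swapExtension hN hs, NG_swapExtension hN hs, or_and_right, and_not_self_iff, false_or,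
    and_iff_left_iff_imp, ← NG_swapExtension hN hs]
  rintro ⟨x, -, rfl⟩
  exact reflection_notMem_NG _ _

lemma card_NG_swapExtension : Nat.card (NG (swapExtension N s)) = Nat.card N := by
  rw [NG_swapExtension hN hs, Subgroup.card_map_of_injective (translation_injective m)]
  rfl

lemma card_swapExtension : Nat.card (swapExtension N s) = 2 * Nat.card N := by
  rw [← card_subgroup_map_mul_card_inf_ker rightHom, map_rightHom_swapExtension,
    Nat.card_zpowers, (Equiv.Perm.swap_isSwap_iff.2 zero_ne_one).orderOf,
    ← card_NG_swapExtension hN hs, NG]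

lemma card_NG_swapExtension_inf_HsubM (i : Fin 3) :
    Nat.card ↥(NG (swapExtension N s) ⊓ HsubM m i) = Nat.card (N.comap (axis m i)) := by
  rw [NG_swapExtension hN hs, HsubM_eq_map_range_axis,
    ← Subgroup.map_inf_eq _ _ _ (translation_injective m), ← map_inf,
    Subgroup.card_map_of_injective (translation_injective m),
    ← card_inf_range_of_injective (axis_injective m i)]
  rfl

lemma card_orderOf_of_notMem_NG (P : ℕ → Prop) :
    Nat.card {g // g ∈ swapExtension N s ∧ g ∉ NG (swapExtension N s) ∧ P (orderOf g)} =
      Nat.card {x // x ∈ N ∧ P (2 * addOrderOf (x.1 + x.2 + s))} := by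
  have horder (x : ZMod m × ZMod m) :
      orderOf (reflection (x + (s, 0))) = 2 * addOrderOf (x.1 + x.2 + s) := by
    rw [orderOf_reflection, Prod.fst_add, Prod.snd_add, add_zero, add_right_comm]
  have himage : {g | g ∈ swapExtension N s ∧ g ∉ NG (swapExtension N s) ∧ P (orderOf g)} =
      (fun x => reflection (x + (s, 0))) '' {x | x ∈ N ∧ P (2 * addOrderOf (x.1 + x.2 + s))} := by
    ext g
    rw [Set.mem_ofPred_eq, ← and_assoc, mem_swapExtension_and_notMem_NG hN hs]
    constructor
    · rintro ⟨⟨x, hx, rfl⟩, hP⟩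
      exact ⟨x, ⟨hx, horder x ▸ hP⟩, rfl⟩
    · rintro ⟨x, ⟨hx, hP⟩, rfl⟩
      exact ⟨⟨x, hx, rfl⟩, (horder x).symm ▸ hP⟩
  exact (congrArg (fun S : Set (Mgrp m) => Nat.card S) himage).trans
    (Nat.card_image_of_injective (reflection_injective.comp (add_left_injective (s, 0))) _)

end SwapExtension

section Counting

open scoped AddSubgroup

variable {A B : Type*} [AddCommGroup A] [AddCommGroup B] {f : B →+ A} {K : AddSubgroup B}
  {d n : ℕ}

lemma card_two_mul_addOrderOf_add_eq_two (hK : K.map f = A[d]) (s : A) :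
    Nat.card {x // x ∈ K ∧ 2 * addOrderOf (f x + s) = 2} =
      if addOrderOf s ∣ d then Nat.card ↥(K ⊓ f.ker) else 0 := by
  have hmem : -s ∈ K.map f ↔ addOrderOf s ∣ d := by
    rw [hK, neg_mem_iff, AddSubgroup.torsionBy.nsmul_iff, addOrderOf_dvd_iff_nsmul_eq_zero]
  simp only [mul_eq_left₀ two_ne_zero, AddMonoid.addOrderOf_eq_one_iff, add_eq_zero_iff_eq_neg]
  split_ifs with hs
  · exact card_mem_and_apply_eq_of_mem_map (hmem.2 hs)
  · have : IsEmpty {x // x ∈ K ∧ f x = -s} := ⟨fun x => hs (hmem.1 ⟨x, x.2⟩)⟩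
    exact Nat.card_of_isEmpty

lemma card_not_two_mul_addOrderOf_add_dvd (hK : K.map f = A[d]) (hdn : d ∣ n) (s : A) :
    Nat.card {x // x ∈ K ∧ ¬ 2 * addOrderOf (f x + s) ∣ 2 * n} =
      if 2 * addOrderOf s ∣ 2 * n then 0 else Nat.card K := by
  have hf {x : B} (hx : x ∈ K) : n • f x = 0 := by
    have hfx : f x ∈ A[d] := hK ▸ AddSubgroup.mem_map_of_mem f hx
    exact addOrderOf_dvd_iff_nsmul_eq_zero.1
      ((addOrderOf_dvd_of_nsmul_eq_zero (AddSubgroup.torsionBy.nsmul_iff.1 hfx)).trans hdn)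
  have hdvd {x : B} (hx : x ∈ K) : 2 * addOrderOf (f x + s) ∣ 2 * n ↔ 2 * addOrderOf s ∣ 2 * n := by
    simp only [Nat.mul_dvd_mul_iff_left two_pos, addOrderOf_dvd_iff_nsmul_eq_zero, smul_add, hf hx,
      zero_add]
  have hiff (x : B) : x ∈ K ∧ ¬ 2 * addOrderOf (f x + s) ∣ 2 * n ↔
      x ∈ K ∧ ¬ 2 * addOrderOf s ∣ 2 * n :=
    and_congr_right fun hx => (hdvd hx).not
  simp only [hiff]
  split_ifs with hs
  · simp [hs]
  · simp [hs]

lemma two_mul_card_not_two_mul_addOrderOf_add_dvd [IsAddCyclic A] [Finite A] [Finite B]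
    (hK : K.map f = A[d]) (hA : Nat.card A = 2 * n) (hd : d ∣ 2 * n) (hdn : ¬ d ∣ n) (s : A) :
    2 * Nat.card {x // x ∈ K ∧ ¬ 2 * addOrderOf (f x + s) ∣ 2 * n} = Nat.card K := by
  have hmap : K.map ((nsmulAddMonoidHom n).comp f) = A[2] := by
    rw [← AddSubgroup.map_map, hK, eq_torsionBy_card (AddSubgroup.map _ _),
      card_map_nsmul_torsionBy_of_dvd_two_mul (hA ▸ hd) hd hdn]
    rfl
  have hs : -(n • s) ∈ K.map ((nsmulAddMonoidHom n).comp f) := by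
    rw [hmap, neg_mem_iff, ← Nat.cast_ofNat (R := ℤ), AddSubgroup.torsionBy.nsmul_iff, ← mul_smul,
      ← hA, card_nsmul_eq_zero']
  rw [← two_mul_card_mem_and_apply_ne hs (hmap ▸ card_torsionBy (hA ▸ Dvd.intro n rfl))]
  simp only [Nat.mul_dvd_mul_iff_left two_pos, addOrderOf_dvd_iff_nsmul_eq_zero, smul_add,
    add_eq_zero_iff_eq_neg, ne_eq]
  rfl

end Counting

section TwistedTorsionCounting

open AddMonoidHom (fst snd)

open scoped AddSubgroup

variable {A : Type*} [AddCommGroup A] [IsAddCyclic A] [Finite A] {a p q r n : ℕ} {s : A}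

lemma map_add_twistedTorsion_of_odd (hp : Odd p) (hpq : Nat.Coprime p q)
    (hA : a * p * q ∣ Nat.card A) :
    (twistedTorsion A a p q).map (fst A A + snd A A) = A[(a * p : ℕ)] := by
  rw [map_add_twistedTorsion hpq hA, (Nat.coprime_two_right.2 hp).gcd_eq_one, Nat.div_one]

lemma map_add_twistedTorsion_two_mul (hpq : Nat.Coprime (2 * r) q)
    (hA : a * (2 * r) * q ∣ Nat.card A) :
    (twistedTorsion A a (2 * r) q).map (fst A A + snd A A) = A[(a * r : ℕ)] := by
  rw [map_add_twistedTorsion hpq hA, Nat.gcd_mul_right_left, Nat.mul_div_cancel_left r two_pos]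

lemma card_twistedTorsion_order_two_of_odd (hp : Odd p) (hpq : Nat.Coprime p q)
    (hA : a * p * q ∣ Nat.card A) (hs : addOrderOf s ∣ a * p) :
    Nat.card {x // x ∈ twistedTorsion A a p q ∧ 2 * addOrderOf (x.1 + x.2 + s) = 2} = a * q := by
  refine (card_two_mul_addOrderOf_add_eq_two (map_add_twistedTorsion_of_odd hp hpq hA) s).trans ?_
  rw [if_pos hs, card_twistedTorsion_inf_ker_add hA, (Nat.coprime_two_right.2 hp).gcd_eq_one,
    mul_one]

lemma card_twistedTorsion_order_two_of_even (hp : Even p) (hpq : Nat.Coprime p q)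
    (hA : a * p * q ∣ Nat.card A) :
    Nat.card {x // x ∈ twistedTorsion A a p q ∧ 2 * addOrderOf (x.1 + x.2 + s) = 2} =
      if 2 * addOrderOf s ∣ a * p then 2 * (a * q) else 0 := by
  obtain ⟨r, rfl⟩ := hp.two_dvd
  refine (card_two_mul_addOrderOf_add_eq_two (map_add_twistedTorsion_two_mul hpq hA) s).trans ?_
  simp only [card_twistedTorsion_inf_ker_add hA, Nat.gcd_mul_right_left, mul_left_comm a 2 r,
    Nat.mul_dvd_mul_iff_left two_pos, mul_comm (a * q) 2]

lemma card_twistedTorsion_order_not_dvd_of_odd (hp : Odd p) (hpq : Nat.Coprime p q)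
    (hA : a * p * q ∣ Nat.card A) (hn : Nat.card A = 2 * n) (hs : addOrderOf s ∣ a * p) :
    Nat.card {x // x ∈ twistedTorsion A a p q ∧ ¬ 2 * addOrderOf (x.1 + x.2 + s) ∣ 2 * n} =
      if 2 * a ∣ 2 * n then 0 else a * p * (a * q) / 2 := by
  have hmap := map_add_twistedTorsion_of_odd hp hpq hA
  have hd : a * p ∣ 2 * n := hn ▸ (Dvd.intro _ rfl).trans hA
  have hdn : 2 * a ∣ 2 * n ↔ a * p ∣ n := by
    rw [Nat.mul_dvd_mul_iff_left two_pos]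
    refine ⟨fun ha => ?_, (Dvd.intro _ rfl).trans⟩
    have hgcd := Nat.dvd_gcd hd (mul_comm a p ▸ Nat.mul_dvd_mul_left p ha)
    rwa [Nat.gcd_mul_right, (Nat.coprime_two_left.2 hp).gcd_eq_one, one_mul] at hgcd
  simp only [hdn]
  split_ifs with h
  · exact (card_not_two_mul_addOrderOf_add_dvd hmap h s).trans
      (if_pos (Nat.mul_dvd_mul_left 2 (hs.trans h)))
  · rw [← card_twistedTorsion hpq hA,
      ← two_mul_card_not_two_mul_addOrderOf_add_dvd hmap hn hd h s,
      Nat.mul_div_cancel_left _ two_pos]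
    rfl

lemma card_twistedTorsion_order_not_dvd_of_even (hp : Even p) (hpq : Nat.Coprime p q)
    (hA : a * p * q ∣ Nat.card A) (hn : Nat.card A = 2 * n) :
    Nat.card {x // x ∈ twistedTorsion A a p q ∧ ¬ 2 * addOrderOf (x.1 + x.2 + s) ∣ 2 * n} =
      if 2 * addOrderOf s ∣ 2 * n then 0 else a * p * (a * q) := by
  obtain ⟨r, rfl⟩ := hp.two_dvd
  have hd : a * r ∣ n := by
    rw [← Nat.mul_dvd_mul_iff_left two_pos, ← hn]
    exact Dvd.dvd.trans ⟨q, by ring⟩ hA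
  refine (card_not_two_mul_addOrderOf_add_dvd (map_add_twistedTorsion_two_mul hpq hA) hd s).trans ?_
  rw [card_twistedTorsion hpq hA]

end TwistedTorsionCounting

lemma exists_coprime_odd_factors {a c e : ℕ} (ha : 0 < a) (hc : 0 < c) (hac : a ∣ c)
    (hace : a * c ∣ e) (hgcd : Nat.gcd (e / (a * c)) (c / a) = 1)
    (hodd : 2 ∣ a ∨ ¬ 2 ∣ c → Odd (e / (a * c))) :
    ∃ p q, Nat.Coprime p q ∧ Odd q ∧ c = a * p ∧ e = a * p * (a * q) := by
  obtain ⟨p, rfl⟩ := hac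
  obtain ⟨q, rfl⟩ := hace
  rw [Nat.mul_div_cancel_left q (by positivity)] at hgcd hodd
  rw [Nat.mul_div_cancel_left p ha] at hgcd
  refine ⟨p, q, Nat.Coprime.symm hgcd, ?_, rfl, by ring⟩
  by_cases h : 2 ∣ a ∨ ¬ 2 ∣ a * p
  · exact hodd h
  · rw [not_or, not_not, Nat.prime_two.dvd_mul] at h
    exact Nat.coprime_two_right.1 (Nat.Coprime.coprime_dvd_right (h.2.resolve_left h.1) hgcd)

/-- Proposition 3.4(i) of Dalla Volta–Montanucci–Zini (`q` odd, `m = q+1` even):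
existence part. `h` counts the elements of order 2 in `G ∖ N(G)` (those of type (A)),
`k` counts the elements of `G ∖ N(G)` whose order does not divide `m` (type (B2)). -/
theorem stmt8 (m : ℕ) (hm : 2 ≤ m) (hmeven : 2 ∣ m) (l a c e : ℕ)
    (hl0 : 0 < l) (ha0 : 0 < a) (hc0 : 0 < c) (he0 : 0 < e)
    (h1 : e ∣ m ^ 2) (h2 : c ∣ m) (h3 : l ∣ c) (h4 : a ∣ c) (h5 : a * c ∣ e)
    (h6 : e / a ∣ m) (h7 : Nat.gcd (e / (a * c)) (c / a) = 1)
    (h8 : 2 ∣ a ∨ ¬ 2 ∣ c → Odd (e / (a * c))) :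
    ∃ G : Subgroup (Mgrp m),
      Nat.card ↥G = 2 * e ∧
      Nat.card ↥(NG G) = e ∧
      G.map (SemidirectProduct.rightHom : Mgrp m →* Equiv.Perm (Fin 3)) =
        Subgroup.zpowers (Equiv.swap (0 : Fin 3) 1) ∧
      Nat.card ↥(NG G ⊓ HsubM m 0) = a ∧
      Nat.card ↥(NG G ⊓ HsubM m 1) = a ∧
      Nat.card ↥(NG G ⊓ HsubM m 2) = c ∧
      (∃ β ∈ G, β ∉ NG G ∧ orderOf β = 2 * l) ∧
      (let h := Nat.card {x : Mgrp m // x ∈ G ∧ x ∉ NG G ∧ orderOf x = 2}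
       let k := Nat.card {x : Mgrp m // x ∈ G ∧ x ∉ NG G ∧ ¬ orderOf x ∣ m}
       (¬ 2 * a ∣ m → h = e / c ∧ k = e / 2) ∧
       (2 * a ∣ m → ¬ 2 * a ∣ c → h = e / c ∧ k = 0) ∧
       (2 * a ∣ c → ¬ 2 * l ∣ m → h = 0 ∧ k = e) ∧
       (2 * a ∣ c → 2 * l ∣ m → ¬ 2 * l ∣ c → h = 0 ∧ k = 0) ∧
       (2 * a ∣ c → 2 * l ∣ c → h = 2 * e / c ∧ k = 0)) := by
  obtain ⟨p, q, hpq, hq, rfl, rfl⟩ := exists_coprime_odd_factors ha0 hc0 h4 h5 h7 h8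
  obtain ⟨n, rfl⟩ := hmeven
  have : NeZero (2 * n) := ⟨by lia⟩
  have hcard : Nat.card (ZMod (2 * n)) = 2 * n := Nat.card_zmod _
  have hA : a * p * q ∣ Nat.card (ZMod (2 * n)) := by
    rwa [mul_left_comm, Nat.mul_div_cancel_left _ ha0, ← hcard] at h6
  obtain ⟨s, rfl⟩ := exists_addOrderOf_eq_of_dvd_card (hcard ▸ h3.trans h2)
  have hdiag := diag_mem_twistedTorsion hq h3
  have hswap (x) (hx : x ∈ twistedTorsion (ZMod (2 * n)) a p q) := swap_mem_twistedTorsion hx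
  have hH := card_NG_swapExtension_inf_HsubM hswap hdiag
  refine ⟨swapExtension (twistedTorsion (ZMod (2 * n)) a p q) s, ?_, ?_,
    map_rightHom_swapExtension, (hH 0).trans (card_comap_inl_twistedTorsion hpq hA),
    (hH 1).trans (card_comap_inr_twistedTorsion hpq hA),
    (hH 2).trans (card_comap_diag_twistedTorsion hq hA),
    ⟨_, reflection_mem_swapExtension, reflection_notMem_NG _ _, ?_⟩, ?_⟩
  · rw [card_swapExtension hswap hdiag, card_twistedTorsion hpq hA]
  · rw [card_NG_swapExtension hswap hdiag, card_twistedTorsion hpq hA]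
  · rw [orderOf_reflection, add_zero]
  · rw [card_orderOf_of_notMem_NG hswap hdiag (· = 2),
      card_orderOf_of_notMem_NG hswap hdiag (¬ · ∣ 2 * n), Nat.mul_div_cancel_left _ hc0,
      mul_left_comm 2, Nat.mul_div_cancel_left _ hc0]
    have hpa : 2 * a ∣ a * p ↔ Even p := by
      rw [mul_comm 2 a, Nat.mul_dvd_mul_iff_left ha0, even_iff_two_dvd]
    rcases p.even_or_odd with hp | hp
    · rw [card_twistedTorsion_order_two_of_even hp hpq hA,
        card_twistedTorsion_order_not_dvd_of_even hp hpq hA hcard]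
      grind [Dvd.dvd.trans]
    · rw [card_twistedTorsion_order_two_of_odd hp hpq hA h3,
        card_twistedTorsion_order_not_dvd_of_odd hp hpq hA hcard h3]
      simp +contextual [hpa, Nat.not_even_iff_odd.2 hp]
end
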